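/- arXiv:math/0301381 — 6 statements merged into one kernel-verified Lean document; each statement's English description precedes it below -/
import Mathlib

section
/- Continuous Gauss–Newton method. Let H be a real Hilbert space, u₀ ∈ H, R > 0, B := {u ∈ H : ‖u − u₀‖ ≤ R}, and let F : H → H be twice Fréchet differentiable with ‖F″(u)‖ ≤ M₂ for all u ∈ B. Assume ‖F′(u)‖ ≤ M₁ for all u ∈ B, F′(u) is boundedly invertible with ‖[F′(u)]^{−1}‖ ≤ m₁ for all u ∈ B, and M₁·m₁²·‖F(u₀)‖ ≤ R. Then the Cauchy problem u̇(t) = −([F′(u)]*F′(u))^{−1}[F′(u)]*F(u), u(0) = u₀ (where A* denotes the Hilbert adjoint) has a global solution u with u(t) ∈ B for all t ≥ 0; the strong limit y := lim_{t→∞} u(t) exists; F(y) = 0; and for all t ≥ 0: ‖F(u(t))‖ ≤ ‖F(u₀)‖·e^{−t} and ‖u(t) − y‖ ≤ M₁·m₁²·‖F(u₀)‖·e^{−t}. -/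
open MeasureTheory Filter
open scoped RealInnerProductSpace

/-!
Suppose `F' u` has a right inverse `L u` along the ball. In the time scale `s = 1 - exp (-t)` the
equation `u' = -L u (F u)` becomes `v' = -L v (F (v 0))`: along it `F ∘ v` has constant derivative
`-F (v 0)`, so that `F (v s) = (1 - s) • F (v 0)`, and `v` reaches a zero of `F` at the finite time
`s = 1`. The new field is Lipschitz and bounded by the radius of the ball, so Picard–Lindelöf yields
`v` on all of `[-1, 1]` at once, and every claim on `u` is read off `v`. The negative half of the
interval makes the derivative of `u` at `t = 0` two-sided.

The Gauss–Newton direction falls under this scheme since `(A* A)⁻¹ A* = A⁻¹` for invertible `A`.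
-/

open Set Metric
open scoped NNReal Topology

lemma lipschitzOnWith_of_comp_eq_id {𝕜 X E G : Type*} [NontriviallyNormedField 𝕜]
    [PseudoMetricSpace X] [SeminormedAddCommGroup E] [NormedSpace 𝕜 E]
    [SeminormedAddCommGroup G] [NormedSpace 𝕜 G] {A : X → E →L[𝕜] G} {L : X → G →L[𝕜] E}
    {s : Set X} {m K : ℝ≥0} (hAL : ∀ x ∈ s, (A x).comp (L x) = .id 𝕜 G)
    (hLA : ∀ x ∈ s, (L x).comp (A x) = .id 𝕜 E) (hL : ∀ x ∈ s, ‖L x‖ ≤ m)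
    (hA : LipschitzOnWith K A s) : LipschitzOnWith (m * K * m) L s := by
  refine .of_dist_le_mul fun x hx y hy ↦ ?_
  have resolvent_identity : L x - L y = (L x).comp ((A y - A x).comp (L y)) := by
    rw [ContinuousLinearMap.sub_comp, hAL y hy, ContinuousLinearMap.comp_sub,
      ← ContinuousLinearMap.comp_assoc, hLA x hx, ContinuousLinearMap.id_comp,
      ContinuousLinearMap.comp_id]
  calc dist (L x) (L y) = ‖(L x).comp ((A y - A x).comp (L y))‖ := by
        rw [dist_eq_norm, resolvent_identity]
    _ ≤ ‖L x‖ * (‖A y - A x‖ * ‖L y‖) :=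
        (ContinuousLinearMap.opNorm_comp_le _ _).trans <| by
          gcongr; exact ContinuousLinearMap.opNorm_comp_le _ _
    _ ≤ m * (K * dist x y * m) := by
        gcongr
        · exact hL x hx
        · rw [← dist_eq_norm, dist_comm x y]
          exact hA.dist_le_mul y hy x hx
        · exact hL y hy
    _ = ↑(m * K * m) * dist x y := by push_cast; ring

lemma norm_apply_le_of_comp_eq_id {𝕜 E G : Type*} [NontriviallyNormedField 𝕜]
    [SeminormedAddCommGroup E] [NormedSpace 𝕜 E] [SeminormedAddCommGroup G] [NormedSpace 𝕜 G]
    {A : E →L[𝕜] G} {L : G →L[𝕜] E} {M m : ℝ} (hAL : A.comp L = .id 𝕜 G) (hA : ‖A‖ ≤ M)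
    (hL : ‖L‖ ≤ m) (y : G) : ‖L y‖ ≤ M * m ^ 2 * ‖y‖ := by
  calc ‖L y‖ = ‖L (A (L y))‖ := by rw [← A.comp_apply, hAL, ContinuousLinearMap.id_apply]
    _ ≤ m * (M * (m * ‖y‖)) :=
        L.le_of_opNorm_le_of_le hL (A.le_of_opNorm_le_of_le hA (L.le_of_opNorm_le hL y))
    _ = M * m ^ 2 * ‖y‖ := by ring

lemma comp_adjoint_eq_of_comp_eq_id {𝕜 E G : Type*} [RCLike 𝕜] [NormedAddCommGroup E]
    [InnerProductSpace 𝕜 E] [CompleteSpace E] [NormedAddCommGroup G] [InnerProductSpace 𝕜 G]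
    [CompleteSpace G] {A : E →L[𝕜] G} {L : G →L[𝕜] E} {P : E →L[𝕜] E}
    (hAL : A.comp L = .id 𝕜 G)
    (hP : P.comp ((ContinuousLinearMap.adjoint A).comp A) = .id 𝕜 E) :
    P.comp (ContinuousLinearMap.adjoint A) = L :=
  calc P.comp (ContinuousLinearMap.adjoint A)
      = (P.comp ((ContinuousLinearMap.adjoint A).comp A)).comp L := by
        rw [ContinuousLinearMap.comp_assoc, ContinuousLinearMap.comp_assoc, hAL,
          ContinuousLinearMap.comp_id]
    _ = L := by rw [hP, ContinuousLinearMap.id_comp]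

lemma tendsto_of_norm_sub_le_mul_exp_neg {E : Type*} [SeminormedAddCommGroup E]
    {u : ℝ → E} {y : E} {C : ℝ} (hu : ∀ t ≥ (0 : ℝ), ‖u t - y‖ ≤ C * Real.exp (-t)) :
    Tendsto u atTop (𝓝 y) := by
  have hexp : Tendsto (fun t : ℝ ↦ C * Real.exp (-t)) atTop (𝓝 0) := by
    simpa using Real.tendsto_exp_neg_atTop_nhds_zero.const_mul C
  exact tendsto_iff_norm_sub_tendsto_zero.2 <| squeeze_zero' (.of_forall fun _ ↦ norm_nonneg _)
    ((eventually_ge_atTop 0).mono hu) hexp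

lemma one_sub_exp_neg_mem_Ioo {t : ℝ} (ht : 0 ≤ t) : 1 - Real.exp (-t) ∈ Ioo (-1 : ℝ) 1 := by
  have hpos : 0 < Real.exp (-t) := Real.exp_pos _
  have hle : Real.exp (-t) ≤ 1 := Real.exp_le_one_iff.2 (neg_nonpos.2 ht)
  constructor <;> linarith

section NormedSpace

variable {E G : Type*} [NormedAddCommGroup E] [NormedSpace ℝ E] [NormedAddCommGroup G]
  [NormedSpace ℝ G]

lemma sub_eq_sub_smul_of_hasDerivWithinAt_const {f : ℝ → E} {c : E} {S : Set ℝ} {x y : ℝ}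
    (hS : Convex ℝ S) (hf : ∀ z ∈ S, HasDerivWithinAt f c S z) (hx : x ∈ S) (hy : y ∈ S) :
    f y - f x = (y - x) • c := by
  have hderiv : ∀ z ∈ S, HasDerivWithinAt (fun z ↦ f z - z • c) 0 S z := fun z hz ↦ by
    simpa only [one_smul, sub_self] using! (hf z hz).sub ((hasDerivWithinAt_id z S).smul_const c)
  have hconst : f y - y • c - (f x - x • c) = 0 := by
    simpa using hS.norm_image_sub_le_of_norm_hasDerivWithin_le hderiv
      (fun _ _ ↦ norm_zero.le) hx hy
  rw [sub_smul, ← sub_eq_zero, ← hconst]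
  abel

lemma hasDerivAt_comp_one_sub_exp_neg {v : ℝ → E} {v' : E} {t : ℝ}
    (hv : HasDerivAt v v' (1 - Real.exp (-t))) :
    HasDerivAt (fun t ↦ v (1 - Real.exp (-t))) (Real.exp (-t) • v') t := by
  have hs : HasDerivAt (fun t : ℝ ↦ 1 - Real.exp (-t)) (Real.exp (-t)) t := by
    simpa using (hasDerivAt_neg t).exp.const_sub 1
  exact hv.scomp t hs

variable [CompleteSpace E]

lemma exists_forall_mem_closedBall_of_isPicardLindelof {f : ℝ → E → E} {tmin tmax : ℝ}
    {t₀ : Icc tmin tmax} {x₀ x : E} {a r L K : ℝ≥0} (hf : IsPicardLindelof f t₀ x₀ a r L K)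
    (hx : x ∈ closedBall x₀ r) :
    ∃ α : ℝ → E, α t₀ = x ∧ ∀ t ∈ Icc tmin tmax,
      α t ∈ closedBall x₀ a ∧ HasDerivWithinAt α (f t (α t)) (Icc tmin tmax) t := by
  -- Cutting `f` off outside the ball makes it bounded by `L` everywhere, which confines solutions.
  let g : ℝ → E → E := fun t ↦ (closedBall x₀ a).indicator (f t)
  have hgf : ∀ t, EqOn (g t) (f t) (closedBall x₀ a) := fun t ↦ eqOn_indicator
  have hg : IsPicardLindelof g t₀ x₀ a r L K :=
    { lipschitzOnWith := fun t ht ↦ by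
        intro x hx y hy
        rw [hgf t hx, hgf t hy]
        exact hf.lipschitzOnWith t ht hx hy
      continuousOn := fun y hy ↦ (hf.continuousOn y hy).congr fun t _ ↦ hgf t hy
      norm_le := fun t ht y hy ↦ (hgf t hy).symm ▸ hf.norm_le t ht y hy
      mul_max_le := hf.mul_max_le }
  have hgL : ∀ t ∈ Icc tmin tmax, ∀ y, ‖g t y‖ ≤ L := fun t ht y ↦ by
    by_cases hy : y ∈ closedBall x₀ (a : ℝ)
    · exact hg.norm_le t ht y hy
    · simp [g, indicator_of_notMem hy]
  obtain ⟨α, hα₀, hα⟩ := hg.exists_eq_forall_mem_Icc_hasDerivWithinAt hx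
  have hmem : ∀ t ∈ Icc tmin tmax, α t ∈ closedBall x₀ a := fun t ht ↦ by
    have htime : ‖t - t₀‖ ≤ max (tmax - t₀) (t₀ - tmin) :=
      abs_sub_le_max_sub ht.1 ht.2 _
    have hspeed : dist (α t) x ≤ L * ‖t - t₀‖ := by
      rw [dist_eq_norm, ← hα₀]
      exact (convex_Icc tmin tmax).norm_image_sub_le_of_norm_hasDerivWithin_le hα
        (fun s hs ↦ hgL s hs _) t₀.2 ht
    calc dist (α t) x₀ ≤ dist (α t) x + dist x x₀ := dist_triangle _ _ _
      _ ≤ L * max (tmax - t₀) (t₀ - tmin) + r := by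
          gcongr
          · exact hspeed.trans (by gcongr)
          · exact hx
      _ ≤ a := le_sub_iff_add_le.1 hf.mul_max_le
  exact ⟨α, hα₀, fun t ht ↦ ⟨hmem t ht, hgf t (hmem t ht) ▸ hα t ht⟩⟩

lemma exists_path_map_eq_one_sub_smul {F : E → G} {F' : E → E →L[ℝ] G} {w : E → E} {u₀ : E}
    {r K : ℝ≥0}
    (hF' : ∀ u ∈ closedBall u₀ r, HasFDerivWithinAt F (F' u) (closedBall u₀ r) u)
    (hF'w : ∀ u ∈ closedBall u₀ r, F' u (w u) = F u₀)
    (hwK : LipschitzOnWith K w (closedBall u₀ r)) (hwr : ∀ u ∈ closedBall u₀ r, ‖w u‖ ≤ r) :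
    ∃ v : ℝ → E, v 0 = u₀ ∧ ∀ s ∈ Icc (-1 : ℝ) 1, v s ∈ closedBall u₀ r ∧
      HasDerivWithinAt v (-w (v s)) (Icc (-1) 1) s ∧ F (v s) = (1 - s) • F u₀ := by
  have h0 : (0 : ℝ) ∈ Icc (-1 : ℝ) 1 := by norm_num
  have hPL : IsPicardLindelof (fun _ u ↦ -w u) (⟨0, h0⟩ : Icc (-1 : ℝ) 1) u₀ r 0 r K :=
    .of_time_independent (fun u hu ↦ (norm_neg _).trans_le (hwr u hu)) hwK.neg (by simp)
  obtain ⟨v, hv₀, hv⟩ :=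
    exists_forall_mem_closedBall_of_isPicardLindelof hPL (mem_closedBall_self le_rfl)
  replace hv₀ : v 0 = u₀ := hv₀
  have hFv' : ∀ s ∈ Icc (-1 : ℝ) 1, HasDerivWithinAt (F ∘ v) (-F u₀) (Icc (-1) 1) s :=
    fun s hs ↦ by
      simpa only [map_neg, hF'w _ (hv s hs).1] using
        (hF' _ (hv s hs).1).comp_hasDerivWithinAt s (hv s hs).2 fun τ hτ ↦ (hv τ hτ).1
  refine ⟨v, hv₀, fun s hs ↦ ⟨(hv s hs).1, (hv s hs).2, ?_⟩⟩
  have hlinear : F (v s) - F (v 0) = (s - 0) • -F u₀ :=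
    sub_eq_sub_smul_of_hasDerivWithinAt_const (convex_Icc _ _) hFv' h0 hs
  rw [eq_add_of_sub_eq hlinear, hv₀]
  module

theorem continuous_gauss_newton_method_general {F : E → G} {F' : E → E →L[ℝ] G}
    {L : E → G →L[ℝ] E} {u₀ : E} {r : ℝ} {K : ℝ≥0} (hr : 0 ≤ r)
    (hF' : ∀ u ∈ closedBall u₀ r, HasFDerivWithinAt F (F' u) (closedBall u₀ r) u)
    (hF'L : ∀ u ∈ closedBall u₀ r, (F' u).comp (L u) = .id ℝ G)
    (hLK : LipschitzOnWith K (fun u ↦ L u (F u₀)) (closedBall u₀ r))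
    (hLr : ∀ u ∈ closedBall u₀ r, ‖L u (F u₀)‖ ≤ r) :
    ∃ u : ℝ → E, u 0 = u₀ ∧
      (∀ t ≥ (0 : ℝ), HasDerivAt u (-L (u t) (F (u t))) t) ∧
      (∀ t ≥ (0 : ℝ), u t ∈ closedBall u₀ r) ∧
      ∃ y : E, Tendsto u atTop (𝓝 y) ∧ F y = 0 ∧
        (∀ t ≥ (0 : ℝ), ‖F (u t)‖ ≤ ‖F u₀‖ * Real.exp (-t)) ∧
        (∀ t ≥ (0 : ℝ), ‖u t - y‖ ≤ r * Real.exp (-t)) := by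
  lift r to ℝ≥0 using hr
  obtain ⟨v, hv₀, hv⟩ := exists_path_map_eq_one_sub_smul hF'
    (fun u hu ↦ by rw [← (F' u).comp_apply, hF'L u hu, ContinuousLinearMap.id_apply]) hLK hLr
  have hmem : ∀ t ≥ (0 : ℝ), 1 - Real.exp (-t) ∈ Icc (-1 : ℝ) 1 := fun t ht ↦
    Ioo_subset_Icc_self (one_sub_exp_neg_mem_Ioo ht)
  have hFv : ∀ t ≥ (0 : ℝ), F (v (1 - Real.exp (-t))) = Real.exp (-t) • F u₀ := fun t ht ↦ by
    rw [(hv _ (hmem t ht)).2.2, sub_sub_cancel]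
  have hdist : ∀ t ≥ (0 : ℝ), ‖v (1 - Real.exp (-t)) - v 1‖ ≤ r * Real.exp (-t) := fun t ht ↦ by
    simpa using (convex_Icc (-1 : ℝ) 1).norm_image_sub_le_of_norm_hasDerivWithin_le
      (fun s hs ↦ (hv s hs).2.1) (fun s hs ↦ (norm_neg _).trans_le (hLr _ (hv s hs).1))
      (right_mem_Icc.2 (by norm_num)) (hmem t ht)
  refine ⟨fun t ↦ v (1 - Real.exp (-t)), by simpa using hv₀, fun t ht ↦ ?_,
    fun t ht ↦ (hv _ (hmem t ht)).1, v 1, tendsto_of_norm_sub_le_mul_exp_neg hdist, ?_,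
    fun t ht ↦ ?_, hdist⟩
  · have hvt := (hv _ (hmem t ht)).2.1.hasDerivAt
      (Icc_mem_nhds_iff.2 (one_sub_exp_neg_mem_Ioo ht))
    simpa only [hFv t ht, map_smul, smul_neg] using hasDerivAt_comp_one_sub_exp_neg hvt
  · simpa using (hv 1 (by norm_num)).2.2
  · rw [hFv t ht, norm_smul, Real.norm_of_nonneg (Real.exp_nonneg _), mul_comm]

end NormedSpace

/-- **Example 4: continuous Gauss–Newton method.** If `‖F′(u)‖ ≤ M₁`,
`‖[F′(u)]⁻¹‖ ≤ m₁`, `‖F″(u)‖ ≤ M₂` on `B`, and `M₁m₁²‖F(u₀)‖ ≤ R`, then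
`u̇ = −([F′(u)]*F′(u))⁻¹[F′(u)]*F(u)`, `u(0) = u₀` has a global solution in `B`
converging to a zero `y` of `F`, with `‖F(u(t))‖ ≤ ‖F(u₀)‖e^{−t}` and
`‖u(t) − y‖ ≤ M₁m₁²‖F(u₀)‖e^{−t}`. -/
theorem continuous_gauss_newton_method
    {H : Type*} [NormedAddCommGroup H] [InnerProductSpace ℝ H] [CompleteSpace H]
    (F : H → H) (F' : H → H →L[ℝ] H) (F'' : H → H →L[ℝ] H →L[ℝ] H)
    (hF' : ∀ u : H, HasFDerivAt F (F' u) u)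
    (hF'' : ∀ u : H, HasFDerivAt F' (F'' u) u)
    (u₀ : H) (R M₁ M₂ m₁ : ℝ) (hR : 0 < R)
    (B : Set H) (hB : B = {u : H | ‖u - u₀‖ ≤ R})
    (hM₂ : ∀ u ∈ B, ‖F'' u‖ ≤ M₂)
    (hM₁ : ∀ u ∈ B, ‖F' u‖ ≤ M₁)
    (Finv : H → H →L[ℝ] H)
    (hinv₁ : ∀ u ∈ B, (F' u).comp (Finv u) = ContinuousLinearMap.id ℝ H)
    (hinv₂ : ∀ u ∈ B, (Finv u).comp (F' u) = ContinuousLinearMap.id ℝ H)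
    (hm₁ : ∀ u ∈ B, ‖Finv u‖ ≤ m₁)
    (Ginv : H → H →L[ℝ] H)
    (hGinv₁ : ∀ u ∈ B,
      ((ContinuousLinearMap.adjoint (F' u)).comp (F' u)).comp (Ginv u) =
        ContinuousLinearMap.id ℝ H)
    (hGinv₂ : ∀ u ∈ B,
      (Ginv u).comp ((ContinuousLinearMap.adjoint (F' u)).comp (F' u)) =
        ContinuousLinearMap.id ℝ H)
    (hsmall : M₁ * m₁ ^ 2 * ‖F u₀‖ ≤ R) :
    ∃ u : ℝ → H, u 0 = u₀ ∧
      (∀ t ≥ (0:ℝ), HasDerivAt u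
        (-(Ginv (u t) (ContinuousLinearMap.adjoint (F' (u t)) (F (u t))))) t) ∧
      (∀ t ≥ (0:ℝ), u t ∈ B) ∧
      ∃ y : H, Tendsto u atTop (nhds y) ∧ F y = 0 ∧
        (∀ t ≥ (0:ℝ), ‖F (u t)‖ ≤ ‖F u₀‖ * Real.exp (-t)) ∧
        (∀ t ≥ (0:ℝ), ‖u t - y‖ ≤ M₁ * m₁ ^ 2 * ‖F u₀‖ * Real.exp (-t)) := by
  have hu₀ : u₀ ∈ B := by simp [hB, hR.le]
  lift m₁ to ℝ≥0 using (norm_nonneg _).trans (hm₁ u₀ hu₀)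
  lift M₂ to ℝ≥0 using (norm_nonneg (F'' u₀)).trans (hM₂ u₀ hu₀)
  have hBR : B = closedBall u₀ R := hB.trans (by ext u; simp [dist_eq_norm])
  have hsub : closedBall u₀ (M₁ * m₁ ^ 2 * ‖F u₀‖) ⊆ B := hBR ▸ closedBall_subset_closedBall hsmall
  have hdir : ∀ u ∈ B, (Ginv u).comp (ContinuousLinearMap.adjoint (F' u)) = Finv u := fun u hu ↦
    comp_adjoint_eq_of_comp_eq_id (hinv₁ u hu) (hGinv₂ u hu)
  have hF'Lip : LipschitzOnWith M₂ F' B := (hBR ▸ convex_closedBall u₀ R)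
    |>.lipschitzOnWith_of_nnnorm_hasFDerivWithin_le (fun u _ ↦ (hF'' u).hasFDerivWithinAt) hM₂
  have hFinvLip := lipschitzOnWith_of_comp_eq_id hinv₁ hinv₂ hm₁ hF'Lip
  have hstep : ∀ u ∈ B, ‖Finv u (F u₀)‖ ≤ M₁ * m₁ ^ 2 * ‖F u₀‖ := fun u hu ↦
    norm_apply_le_of_comp_eq_id (hinv₁ u hu) (hM₁ u hu) (hm₁ u hu) (F u₀)
  obtain ⟨u, h₀, hode, hmem, hlim⟩ := continuous_gauss_newton_method_general
    ((norm_nonneg _).trans (hstep u₀ hu₀)) (fun u _ ↦ (hF' u).hasFDerivWithinAt)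
    (fun u hu ↦ hinv₁ u (hsub hu))
    (((ContinuousLinearMap.apply ℝ H (F u₀)).lipschitz.comp_lipschitzOnWith hFinvLip).mono hsub)
    (fun u hu ↦ hstep u (hsub hu))
  refine ⟨u, h₀, fun t ht ↦ (hode t ht).congr_deriv ?_, fun t ht ↦ hsub (hmem t ht), hlim⟩
  rw [← hdir _ (hsub (hmem t ht)), ContinuousLinearMap.comp_apply]
end

section
/- Continuous modified Newton method. Let H be a real Hilbert space, u₀ ∈ H, and let F : H → H be twice Fréchet differentiable. Assume F′(u₀) is boundedly invertible with ‖[F′(u₀)]^{−1}‖ ≤ m₀, set R := (2M₂m₀)^{−1} and B := {u ∈ H : ‖u − u₀‖ ≤ R}, where M₂ > 0 satisfies ‖F″(u)‖ ≤ M₂ for all u ∈ B. If 4·m₀²·M₂·‖F(u₀)‖ ≤ 1, then the Cauchy problem u̇(t) = −[F′(u₀)]^{−1}F(u(t)), u(0) = u₀ has a global solution u with u(t) ∈ B for all t ≥ 0; the strong limit y := lim_{t→∞} u(t) exists; F(y) = 0; and for all t ≥ 0: ‖F(u(t))‖ ≤ ‖F(u₀)‖·e^{−t/2} and ‖u(t)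 − y‖ ≤ 2m₀·‖F(u₀)‖·e^{−t/2}. -/
open MeasureTheory Filter
open scoped RealInnerProductSpace

/-!
In the variable `w` given by `u = u₀ + [F′(u₀)]⁻¹ w` the equation reads `ẇ = h(w) - w`, where
`h(w) = w - F(u₀ + [F′(u₀)]⁻¹ w)` is a contraction of a ball into itself: its derivative
`(F′(u₀) - F′(u)) [F′(u₀)]⁻¹` is small. The solutions of `ẇ = h(w) - w` are the fixed points of
the contraction `w ↦ (t ↦ e⁻ᵗ w(0) + ∫₀ᵗ eˢ⁻ᵗ h(w(s)) ds)`, which preserves the ball, so they are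
global. If `h` is `K`-Lipschitz, two of them approach each other at the rate `e^{-(1-K)t}`.
Comparing a solution with the fixed point of `h` gives the limit, and comparing it with its own time
translates gives the decay of `ẇ = -F(u)`.
-/

section MetricSpace

open Metric Set
open scoped NNReal Topology

theorem mapsTo_closedBall_of_lipschitzOnWith {α : Type*} [PseudoMetricSpace α] {h : α → α}
    {K : ℝ≥0} {c : α} {r : ℝ} (hh : LipschitzOnWith K h (closedBall c r))
    (hc : dist (h c) c ≤ (1 - K) * r) : MapsTo h (closedBall c r) (closedBall c r) := fun x hx => by
  have hcmem : c ∈ closedBall c r := mem_closedBall_self (dist_nonneg.trans hx)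
  calc dist (h x) c ≤ dist (h x) (h c) + dist (h c) c := dist_triangle _ _ _
    _ ≤ K * r + (1 - K) * r := by
        gcongr
        exact (hh.dist_le_mul x hx c hcmem).trans (by gcongr; exact hx)
    _ = r := by ring

theorem tendsto_of_dist_le_mul_exp {α : Type*} [PseudoMetricSpace α] {u : ℝ → α} {y : α}
    {C a : ℝ} (ha : 0 < a) (hu : ∀ t ≥ 0, dist (u t) y ≤ C * Real.exp (-(a * t))) :
    Tendsto u atTop (𝓝 y) := by
  have hexp : Tendsto (fun t => C * Real.exp (-(a * t))) atTop (𝓝 0) := by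
    simpa using (Real.tendsto_exp_neg_atTop_nhds_zero.comp
      (tendsto_id.const_mul_atTop ha)).const_mul C
  exact tendsto_iff_dist_tendsto_zero.2 (squeeze_zero' (.of_forall fun _ => dist_nonneg)
    ((eventually_ge_atTop 0).mono hu) hexp)

end MetricSpace

section RelaxationFlow

open Metric Set
open scoped BoundedContinuousFunction NNReal Topology

variable {E : Type*} [NormedAddCommGroup E] [NormedSpace ℝ E]

/-- The solution of `ẇ = f - w`, `w 0 = x`, given by variation of constants. -/
noncomputable def duhamel (x : E) (f : ℝ → E) (t : ℝ) : E :=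
  Real.exp (-t) • (x + ∫ s in (0 : ℝ)..t, Real.exp s • f s)

theorem duhamel_zero (x : E) (f : ℝ → E) : duhamel x f 0 = x := by
  simp [duhamel]

theorem hasDerivAt_duhamel [CompleteSpace E] (x : E) {f : ℝ → E} (hf : Continuous f) (t : ℝ) :
    HasDerivAt (duhamel x f) (f t - duhamel x f t) t := by
  have hint : HasDerivAt (fun τ => x + ∫ s in (0 : ℝ)..τ, Real.exp s • f s)
      (Real.exp t • f t) t :=
    ((Real.continuous_exp.smul hf).integral_hasStrictDerivAt 0 t).hasDerivAt.const_add x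
  refine ((hasDerivAt_neg t).exp.smul hint).congr_deriv ?_
  simp only [duhamel, smul_smul, ← Real.exp_add, neg_add_cancel, Real.exp_zero, one_smul,
    mul_neg, mul_one, neg_smul]
  abel

/-- For constant `g` this is the invariance of balls, for `x = y` the nonexpansiveness of
`duhamel x`. -/
theorem norm_duhamel_sub_duhamel_le {x y : E} {f g : ℝ → E} (hf : Continuous f)
    (hg : Continuous g) {C t : ℝ} (ht : 0 ≤ t) (hxy : ‖x - y‖ ≤ C)
    (hfg : ∀ s ∈ Icc 0 t, ‖f s - g s‖ ≤ C) :
    ‖duhamel x f t - duhamel y g t‖ ≤ C := by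
  have hint : ‖∫ s in (0 : ℝ)..t, Real.exp s • (f s - g s)‖ ≤ (Real.exp t - 1) * C :=
    calc ‖∫ s in (0 : ℝ)..t, Real.exp s • (f s - g s)‖
        ≤ ∫ s in (0 : ℝ)..t, Real.exp s * C := by
          refine intervalIntegral.norm_integral_le_of_norm_le ht (ae_of_all _ fun s hs => ?_)
            ((Real.continuous_exp.mul continuous_const).intervalIntegrable 0 t)
          rw [norm_smul, Real.norm_of_nonneg (Real.exp_pos s).le]
          gcongr
          exact hfg s (Ioc_subset_Icc_self hs)
      _ = (Real.exp t - 1) * C := by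
          rw [intervalIntegral.integral_mul_const, integral_exp, Real.exp_zero]
  have hsub : duhamel x f t - duhamel y g t =
      Real.exp (-t) • (x - y + ∫ s in (0 : ℝ)..t, Real.exp s • (f s - g s)) := by
    simp only [duhamel, smul_sub]
    have hfint : IntervalIntegrable (fun s => Real.exp s • f s) volume 0 t :=
      (Real.continuous_exp.smul hf).intervalIntegrable 0 t
    have hgint : IntervalIntegrable (fun s => Real.exp s • g s) volume 0 t :=
      (Real.continuous_exp.smul hg).intervalIntegrable 0 t
    rw [intervalIntegral.integral_sub hfint hgint, ← smul_sub]
    congr 1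
    abel
  calc ‖duhamel x f t - duhamel y g t‖
      ≤ Real.exp (-t) * (C + (Real.exp t - 1) * C) := by
        rw [hsub, norm_smul, Real.norm_of_nonneg (Real.exp_pos _).le]
        gcongr
        exact norm_add_le_of_le hxy hint
    _ = Real.exp (-t) * Real.exp t * C := by ring
    _ = C := by rw [← Real.exp_add, neg_add_cancel, Real.exp_zero, one_mul]

theorem duhamel_const [CompleteSpace E] (x : E) (t : ℝ) : duhamel x (fun _ => x) t = x := by
  rw [duhamel, intervalIntegral.integral_smul_const, integral_exp, Real.exp_zero, sub_smul,
    one_smul, add_sub_cancel, smul_smul, ← Real.exp_add, neg_add_cancel, Real.exp_zero, one_smul]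

theorem duhamel_mem_closedBall [CompleteSpace E] {c x : E} {r t : ℝ} {f : ℝ → E}
    (hf : Continuous f) (hx : x ∈ closedBall c r) (hfr : ∀ s ∈ Icc 0 t, f s ∈ closedBall c r)
    (ht : 0 ≤ t) : duhamel x f t ∈ closedBall c r := by
  simp only [mem_closedBall_iff_norm] at hx hfr ⊢
  simpa only [duhamel_const] using norm_duhamel_sub_duhamel_le hf continuous_const ht hx hfr

/-- `w` stays in `s` and solves `ẇ = h(w) - w` for all `t ≥ 0`: the continuous-time analogue of the
fixed point iteration of `h`. The derivative at `t = 0` is two-sided, so `w` is a function on `ℝ`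
with arbitrary values at negative times. -/
def IsRelaxationFlow (h : E → E) (s : Set E) (w : ℝ → E) : Prop :=
  ∀ t ≥ 0, w t ∈ s ∧ HasDerivAt w (h (w t) - w t) t

variable {h : E → E} {s : Set E} {K : ℝ≥0} {w w₁ w₂ : ℝ → E} {c x : E} {r t : ℝ}

namespace IsRelaxationFlow

theorem comp_const_add (hw : IsRelaxationFlow h s w) {τ : ℝ} (hτ : 0 ≤ τ) :
    IsRelaxationFlow h s fun t => w (τ + t) := fun t ht =>
  ⟨(hw (τ + t) (add_nonneg hτ ht)).1, (hw (τ + t) (add_nonneg hτ ht)).2.comp_const_add τ t⟩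

theorem const (hx : x ∈ s) (hfix : h x = x) : IsRelaxationFlow h s fun _ => x := fun t _ =>
  ⟨hx, (hasDerivAt_const t x).congr_deriv (by rw [hfix, sub_self])⟩

theorem norm_sub_le (hh : LipschitzOnWith K h s) (hw₁ : IsRelaxationFlow h s w₁)
    (hw₂ : IsRelaxationFlow h s w₂) (ht : 0 ≤ t) :
    ‖w₁ t - w₂ t‖ ≤ ‖w₁ 0 - w₂ 0‖ * Real.exp (-((1 - K) * t)) := by
  have hderiv : ∀ τ ≥ 0, HasDerivAt (fun τ => Real.exp τ • (w₁ τ - w₂ τ))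
      (Real.exp τ • (h (w₁ τ) - h (w₂ τ))) τ := fun τ hτ => by
    refine ((Real.hasDerivAt_exp τ).smul ((hw₁ τ hτ).2.sub (hw₂ τ hτ).2)).congr_deriv ?_
    rw [← smul_add]
    congr 1
    simp only [Pi.sub_apply]
    abel
  have hbound : ∀ τ ≥ 0, ‖Real.exp τ • (h (w₁ τ) - h (w₂ τ))‖ ≤
      K * ‖Real.exp τ • (w₁ τ - w₂ τ)‖ := fun τ hτ => by
    rw [norm_smul, norm_smul, mul_left_comm]
    gcongr
    exact hh.norm_sub_le (hw₁ τ hτ).1 (hw₂ τ hτ).1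
  have hgronwall := norm_le_gronwallBound_of_norm_deriv_right_le (ε := 0) (b := t)
    (fun τ hτ => (hderiv τ hτ.1).continuousAt.continuousWithinAt)
    (fun τ hτ => (hderiv τ hτ.1).hasDerivWithinAt) le_rfl
    (fun τ hτ => (hbound τ hτ.1).trans_eq (add_zero _).symm) t ⟨ht, le_rfl⟩
  rw [gronwallBound_ε0, norm_smul, Real.norm_of_nonneg (Real.exp_pos t).le, Real.exp_zero,
    one_smul, sub_zero, mul_comm, ← le_div_iff₀ (Real.exp_pos t), mul_div_assoc,
    ← Real.exp_sub] at hgronwall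
  exact hgronwall.trans_eq (by ring_nf)

/-- The time translates `w (τ + ·)` are trajectories too; divide their distance to `w` by `τ` and
let `τ → 0`. -/
theorem norm_velocity_le (hh : LipschitzOnWith K h s) (hw : IsRelaxationFlow h s w) (ht : 0 ≤ t) :
    ‖h (w t) - w t‖ ≤ ‖h (w 0) - w 0‖ * Real.exp (-((1 - K) * t)) := by
  have hslope : ∀ t ≥ 0, Tendsto (fun τ : ℝ => ‖τ⁻¹ • (w (t + τ) - w t)‖) (𝓝[>] 0)
      (𝓝 ‖h (w t) - w t‖) := fun t ht =>
    ((hasDerivAt_iff_tendsto_slope_zero.1 (hw t ht).2).mono_left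
      (nhdsWithin_mono 0 fun _ hτ => ne_of_gt hτ)).norm
  refine le_of_tendsto_of_tendsto (hslope t ht) ((hslope 0 le_rfl).mul_const _) ?_
  filter_upwards [self_mem_nhdsWithin] with τ (hτ : 0 < τ)
  have hdist := (hw.comp_const_add hτ.le).norm_sub_le hh hw ht
  rw [norm_smul, norm_smul, mul_assoc, zero_add, add_comm t τ]
  rw [add_zero] at hdist
  gcongr

theorem norm_sub_fixedPoint_le (hh : LipschitzOnWith K h s) (hK : K < 1)
    (hw : IsRelaxationFlow h s w) (hx : x ∈ s) (hfix : h x = x) (ht : 0 ≤ t) :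
    ‖w t - x‖ ≤ ‖h (w 0) - w 0‖ / (1 - K) * Real.exp (-((1 - K) * t)) := by
  have hK' : (0 : ℝ) < 1 - K := sub_pos.2 (by exact_mod_cast hK)
  have hinit : ‖w 0 - x‖ ≤ ‖h (w 0) - w 0‖ / (1 - K) := by
    have hlip : ‖h (w 0) - x‖ ≤ K * ‖w 0 - x‖ := by
      simpa only [hfix] using hh.norm_sub_le (hw 0 le_rfl).1 hx
    have htri : ‖w 0 - x‖ ≤ ‖h (w 0) - w 0‖ + ‖h (w 0) - x‖ := by
      simpa only [dist_eq_norm, norm_sub_rev (w 0)] using dist_triangle (w 0) (h (w 0)) x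
    rw [le_div_iff₀ hK']
    linarith
  exact (norm_sub_le hh hw (const hx hfix) ht).trans (by gcongr)

end IsRelaxationFlow

variable [CompleteSpace E]

theorem exists_forall_eq_duhamel {φ : closedBall c r → closedBall c r} (hφ : ContractingWith K φ)
    (hx : x ∈ closedBall c r) :
    ∃ v : ℝ≥0 → closedBall c r, Continuous v ∧
      ∀ t : ℝ≥0, v t = duhamel x (fun s => φ (v s.toNNReal)) t := by
  let force (v : ℝ≥0 →ᵇ closedBall c r) (s : ℝ) : E := φ (v s.toNNReal)
  have hforce (v) : Continuous (force v) := continuous_subtype_val.comp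
    (hφ.toLipschitzWith.continuous.comp (v.continuous.comp continuous_real_toNNReal))
  have hmem (v) (t : ℝ≥0) : duhamel x (force v) t ∈ closedBall c r :=
    duhamel_mem_closedBall (hforce v) hx (fun s _ => (φ (v s.toNNReal)).2) t.2
  have hcont (v) : Continuous (duhamel x (force v)) :=
    continuous_iff_continuousAt.2 fun t => (hasDerivAt_duhamel x (hforce v) t).continuousAt
  let T (v : ℝ≥0 →ᵇ closedBall c r) : ℝ≥0 →ᵇ closedBall c r :=
    .mkOfBound ⟨fun t => ⟨duhamel x (force v) t, hmem v t⟩,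
      ((hcont v).comp NNReal.continuous_coe).subtype_mk _⟩ (diam (closedBall c r))
      fun s t => dist_le_diam_of_mem isBounded_closedBall (hmem v s) (hmem v t)
  have hT : ContractingWith K T := by
    refine ⟨hφ.1, LipschitzWith.of_dist_le_mul fun v₁ v₂ => ?_⟩
    refine (BoundedContinuousFunction.dist_le (by positivity)).2 fun t => ?_
    rw [Subtype.dist_eq, dist_eq_norm]
    refine norm_duhamel_sub_duhamel_le (hforce v₁) (hforce v₂) t.2
      (by rw [sub_self, norm_zero]; positivity) fun s _ => ?_
    rw [← dist_eq_norm]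
    exact (hφ.dist_le_mul _ _).trans (by gcongr; exact BoundedContinuousFunction.dist_coe_le_dist _)
  have : Nonempty (ℝ≥0 →ᵇ closedBall c r) := ⟨.const _ ⟨x, hx⟩⟩
  have : CompleteSpace (closedBall c r) := isClosed_closedBall.completeSpace_coe
  obtain ⟨v, hv⟩ : ∃ v, T v = v := ⟨_, hT.fixedPoint_isFixedPt⟩
  exact ⟨v, v.continuous, fun t => congrArg Subtype.val (DFunLike.congr_fun hv t).symm⟩

theorem exists_isRelaxationFlow (hmaps : MapsTo h (closedBall c r) (closedBall c r))
    (hh : ContractingWith K (hmaps.restrict h _ _)) (hx : x ∈ closedBall c r) :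
    ∃ w, w 0 = x ∧ IsRelaxationFlow h (closedBall c r) w := by
  obtain ⟨v, hvcont, hv⟩ := exists_forall_eq_duhamel hh hx
  let f (s : ℝ) : E := hmaps.restrict h _ _ (v s.toNNReal)
  have hf : Continuous f := continuous_subtype_val.comp
    (hh.toLipschitzWith.continuous.comp (hvcont.comp continuous_real_toNNReal))
  have hvf (t : ℝ) (ht : 0 ≤ t) : duhamel x f t = v t.toNNReal := by
    rw [hv, Real.coe_toNNReal t ht]
  refine ⟨duhamel x f, duhamel_zero x f, fun t ht => ⟨?_, ?_⟩⟩
  · exact hvf t ht ▸ (v t.toNNReal).2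
  · refine (hasDerivAt_duhamel x hf t).congr_deriv ?_
    rw [hvf t ht]
    rfl

end RelaxationFlow

section ModifiedNewton

open Metric Set
open scoped NNReal Topology

variable {E G : Type*} [NormedAddCommGroup E] [NormedSpace ℝ E]
  [NormedAddCommGroup G] [NormedSpace ℝ G]
  {F : E → G} {F' : E → E →L[ℝ] G} {A : G →L[ℝ] E} {x₀ : E} {K : ℝ≥0} {r R : ℝ}

theorem add_apply_mem_closedBall (hr : ‖A‖ * r ≤ R) {w : G} (hw : w ∈ closedBall 0 r) :
    x₀ + A w ∈ closedBall x₀ R := by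
  rw [mem_closedBall_iff_norm, add_sub_cancel_left]
  exact (A.le_opNorm_of_le (mem_closedBall_zero_iff.1 hw)).trans hr

theorem lipschitzOnWith_sub_comp_add_apply
    (hF : ∀ x ∈ closedBall x₀ R, HasFDerivWithinAt F (F' x) (closedBall x₀ R) x)
    (hA : ∀ x ∈ closedBall x₀ R, ‖ContinuousLinearMap.id ℝ G - (F' x).comp A‖ ≤ K)
    (hr : ‖A‖ * r ≤ R) :
    LipschitzOnWith K (fun w => w - F (x₀ + A w)) (closedBall 0 r) := by
  refine (convex_closedBall 0 r).lipschitzOnWith_of_nnnorm_hasFDerivWithin_le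
    (fun w hw => (hasFDerivWithinAt_id w _).sub
      ((hF _ (add_apply_mem_closedBall hr hw)).comp w (A.hasFDerivWithinAt.const_add x₀)
        fun _ => add_apply_mem_closedBall hr))
    fun w hw => hA _ (add_apply_mem_closedBall hr hw)

/-- The trajectory is `u = x₀ + A w` with `w` the relaxation flow of `w ↦ w - F (x₀ + A w)`. -/
theorem exists_modifiedNewton_flow [CompleteSpace G]
    (hF : ∀ x ∈ closedBall x₀ R, HasFDerivWithinAt F (F' x) (closedBall x₀ R) x)
    (hA : ∀ x ∈ closedBall x₀ R, ‖ContinuousLinearMap.id ℝ G - (F' x).comp A‖ ≤ K) (hK : K < 1)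
    (hR : ‖A‖ * ‖F x₀‖ ≤ (1 - K) * R) :
    ∃ u : ℝ → E, u 0 = x₀ ∧
      (∀ t ≥ 0, HasDerivAt u (-(A (F (u t)))) t) ∧
      (∀ t ≥ 0, u t ∈ closedBall x₀ R) ∧
      ∃ y : E, Tendsto u atTop (𝓝 y) ∧ F y = 0 ∧
        (∀ t ≥ 0, ‖F (u t)‖ ≤ ‖F x₀‖ * Real.exp (-((1 - K) * t))) ∧
        ∀ t ≥ 0, ‖u t - y‖ ≤ ‖A‖ * (‖F x₀‖ / (1 - K)) * Real.exp (-((1 - K) * t)) := by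
  have hK' : (0 : ℝ) < 1 - K := sub_pos.2 (by exact_mod_cast hK)
  obtain ⟨r, hr_def⟩ : ∃ r, r = ‖F x₀‖ / (1 - K) := ⟨_, rfl⟩
  have hr : ‖A‖ * r ≤ R := by
    rwa [hr_def, ← mul_div_assoc, div_le_iff₀' hK']
  let h (w : G) : G := w - F (x₀ + A w)
  have hres (w : G) : h w - w = -F (x₀ + A w) := sub_sub_cancel_left w _
  have hres₀ : ‖h 0 - 0‖ = ‖F x₀‖ := by rw [hres, norm_neg, map_zero, add_zero]
  have hlip : LipschitzOnWith K h (closedBall 0 r) := lipschitzOnWith_sub_comp_add_apply hF hA hr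
  have hmaps : MapsTo h (closedBall 0 r) (closedBall 0 r) :=
    mapsTo_closedBall_of_lipschitzOnWith hlip
      (by rw [dist_eq_norm, hres₀, hr_def, mul_div_cancel₀ _ hK'.ne'])
  have hcontr : ContractingWith K (hmaps.restrict h _ _) := ⟨hK, hlip.mapsToRestrict hmaps⟩
  have hzero_mem : (0 : G) ∈ closedBall 0 r := mem_closedBall_self (by rw [hr_def]; positivity)
  obtain ⟨w, hw₀, hw⟩ := exists_isRelaxationFlow hmaps hcontr hzero_mem
  obtain ⟨z, hz, hfix, -⟩ :=
    hcontr.exists_fixedPoint' isClosed_closedBall.isComplete hmaps hzero_mem (edist_ne_top _ _)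
  have hdist : ∀ t ≥ 0, ‖x₀ + A (w t) - (x₀ + A z)‖ ≤
      ‖A‖ * (‖F x₀‖ / (1 - K)) * Real.exp (-((1 - K) * t)) := fun t ht => by
    rw [add_sub_add_left_eq_sub, ← map_sub, mul_assoc, ← hres₀, ← hw₀]
    exact A.le_opNorm_of_le (hw.norm_sub_fixedPoint_le hlip hK hz hfix ht)
  refine ⟨fun t => x₀ + A (w t), by simp only [hw₀, map_zero, add_zero],
    fun t ht => ?_,
    fun t ht => add_apply_mem_closedBall hr (hw t ht).1, x₀ + A z,
    tendsto_of_dist_le_mul_exp hK'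
      (by simpa only [dist_eq_norm] using hdist), ?_, fun t ht => ?_, hdist⟩
  · rw [← map_neg, ← hres]
    exact (A.hasFDerivAt.comp_hasDerivAt t (hw t ht).2).const_add x₀
  · rw [← neg_eq_zero, ← hres, hfix, sub_self]
  · rw [← norm_neg, ← hres, ← hres₀, ← hw₀]
    exact hw.norm_velocity_le hlip ht

theorem continuous_modified_newton_method_general [CompleteSpace G]
    (hF' : ∀ x ∈ closedBall x₀ R, HasFDerivWithinAt F (F' x) (closedBall x₀ R) x)
    {M₂ m₀ : ℝ} (hM₂pos : 0 < M₂) (hm₀pos : 0 < m₀) (hR : R = (2 * M₂ * m₀)⁻¹)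
    (hM₂ : ∀ x ∈ closedBall x₀ R, ‖F' x - F' x₀‖ ≤ M₂ * ‖x - x₀‖)
    (hinv : (F' x₀).comp A = ContinuousLinearMap.id ℝ G) (hm₀ : ‖A‖ ≤ m₀)
    (hsmall : 4 * m₀ ^ 2 * M₂ * ‖F x₀‖ ≤ 1) :
    ∃ u : ℝ → E, u 0 = x₀ ∧
      (∀ t ≥ 0, HasDerivAt u (-(A (F (u t)))) t) ∧
      (∀ t ≥ 0, u t ∈ closedBall x₀ R) ∧
      ∃ y : E, Tendsto u atTop (𝓝 y) ∧ F y = 0 ∧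
        (∀ t ≥ 0, ‖F (u t)‖ ≤ ‖F x₀‖ * Real.exp (-(t / 2))) ∧
        ∀ t ≥ 0, ‖u t - y‖ ≤ 2 * m₀ * ‖F x₀‖ * Real.exp (-(t / 2)) := by
  have hA : ∀ x ∈ closedBall x₀ R,
      ‖ContinuousLinearMap.id ℝ G - (F' x).comp A‖ ≤ (1 / 2 : ℝ≥0) := fun x hx => by
    rw [← hinv, ← ContinuousLinearMap.sub_comp]
    calc ‖(F' x₀ - F' x).comp A‖ ≤ ‖F' x₀ - F' x‖ * ‖A‖ := ContinuousLinearMap.opNorm_comp_le _ _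
      _ ≤ M₂ * R * m₀ := by
          rw [norm_sub_rev]
          have hx' : ‖x - x₀‖ ≤ R := mem_closedBall_iff_norm.1 hx
          have hM₂x : ‖F' x - F' x₀‖ ≤ M₂ * R := (hM₂ x hx).trans (by gcongr)
          exact mul_le_mul hM₂x hm₀ (norm_nonneg A) ((norm_nonneg _).trans hM₂x)
      _ = (1 / 2 : ℝ≥0) := by rw [hR]; push_cast; field_simp
  have hAF : ‖A‖ * ‖F x₀‖ ≤ (1 - (1 / 2 : ℝ≥0)) * R :=
    calc ‖A‖ * ‖F x₀‖ ≤ m₀ * ‖F x₀‖ := by gcongr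
      _ ≤ 1 / (4 * m₀ * M₂) := by
          rw [le_div_iff₀ (by positivity)]
          linarith
      _ = (1 - (1 / 2 : ℝ≥0)) * R := by rw [hR]; push_cast; field_simp; norm_num
  have hrate (t : ℝ) : (1 - (1 / 2 : ℝ≥0)) * t = t / 2 := by push_cast; ring
  obtain ⟨u, hu₀, hderiv, hball, y, hlim, hy, hdecay, hdist⟩ :=
    exists_modifiedNewton_flow hF' hA (by norm_num) hAF
  simp only [hrate] at hdecay hdist
  refine ⟨u, hu₀, hderiv, hball, y, hlim, hy, hdecay, fun t ht => (hdist t ht).trans ?_⟩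
  calc ‖A‖ * (‖F x₀‖ / (1 - (1 / 2 : ℝ≥0))) * Real.exp (-(t / 2))
      = 2 * ‖A‖ * ‖F x₀‖ * Real.exp (-(t / 2)) := by push_cast; ring
    _ ≤ 2 * m₀ * ‖F x₀‖ * Real.exp (-(t / 2)) := by gcongr

end ModifiedNewton

/-- **Example 5: continuous modified Newton method.** With
`R = (2M₂m₀)⁻¹`, `‖[F′(u₀)]⁻¹‖ ≤ m₀`, `‖F″(u)‖ ≤ M₂` on `B`, and
`4m₀²M₂‖F(u₀)‖ ≤ 1`, the problem `u̇ = −[F′(u₀)]⁻¹F(u)`, `u(0) = u₀` has a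
global solution in `B` converging to a zero `y` of `F`, with
`‖F(u(t))‖ ≤ ‖F(u₀)‖e^{−t/2}` and `‖u(t) − y‖ ≤ 2m₀‖F(u₀)‖e^{−t/2}`. -/
theorem continuous_modified_newton_method
    {H : Type*} [NormedAddCommGroup H] [InnerProductSpace ℝ H] [CompleteSpace H]
    (F : H → H) (F' : H → H →L[ℝ] H) (F'' : H → H →L[ℝ] H →L[ℝ] H)
    (hF' : ∀ u : H, HasFDerivAt F (F' u) u)
    (hF'' : ∀ u : H, HasFDerivAt F' (F'' u) u)
    (u₀ : H) (M₂ m₀ R : ℝ) (hM₂pos : 0 < M₂) (hm₀pos : 0 < m₀)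
    (hR : R = (2 * M₂ * m₀)⁻¹)
    (B : Set H) (hB : B = {u : H | ‖u - u₀‖ ≤ R})
    (hM₂ : ∀ u ∈ B, ‖F'' u‖ ≤ M₂)
    (Finv₀ : H →L[ℝ] H)
    (hinv₁ : (F' u₀).comp Finv₀ = ContinuousLinearMap.id ℝ H)
    (hinv₂ : Finv₀.comp (F' u₀) = ContinuousLinearMap.id ℝ H)
    (hm₀ : ‖Finv₀‖ ≤ m₀)
    (hsmall : 4 * m₀ ^ 2 * M₂ * ‖F u₀‖ ≤ 1) :
    ∃ u : ℝ → H, u 0 = u₀ ∧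
      (∀ t ≥ (0:ℝ), HasDerivAt u (-(Finv₀ (F (u t)))) t) ∧
      (∀ t ≥ (0:ℝ), u t ∈ B) ∧
      ∃ y : H, Tendsto u atTop (nhds y) ∧ F y = 0 ∧
        (∀ t ≥ (0:ℝ), ‖F (u t)‖ ≤ ‖F u₀‖ * Real.exp (-(t / 2))) ∧
        (∀ t ≥ (0:ℝ), ‖u t - y‖ ≤ 2 * m₀ * ‖F u₀‖ * Real.exp (-(t / 2))) := by
  obtain rfl : B = Metric.closedBall u₀ R := by rw [hB]; ext; exact mem_closedBall_iff_norm.symm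
  refine continuous_modified_newton_method_general (fun x _ => (hF' x).hasFDerivWithinAt)
    hM₂pos hm₀pos hR (fun x hx => ?_) hinv₁ hm₀ hsmall
  exact (convex_closedBall u₀ R).norm_image_sub_le_of_norm_hasFDerivWithin_le
    (fun z _ => (hF'' z).hasFDerivWithinAt) hM₂
    (Metric.mem_closedBall_self (by rw [hR]; positivity)) hx
end

section
/- Let H be a real Hilbert space, u₀ ∈ H, R > 0, B := {u ∈ H : ‖u − u₀‖ ≤ R}, and let F : H → H be twice Fréchet differentiable with ‖F″(v)‖ ≤ M₂ for all v ∈ B. Assume F′(u₀) is boundedly invertible with ‖[F′(u₀)]^{−1}‖ ≤ m₀, and that M₂·R·m₀ ≤ 1/2. Then for every u ∈ B: ⟨F′(u)[F′(u₀)]^{−1}F(u), F(u)⟩ ≥ (1/2)·‖F(u)‖². -/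
open MeasureTheory Filter
open scoped RealInnerProductSpace

/-!
Since `F'(u₀) S = 1`, the operator `F'(u) S` is the perturbation `1 + (F'(u) - F'(u₀)) S` of the
identity. The mean value inequality bounds `F'(u) - F'(u₀)` by `M₂ R`, so the perturbation has norm
at most `M₂ R m₀ ≤ 1/2`, and Cauchy-Schwarz loses at most half of `‖y‖²` in `⟪F'(u) S y, y⟫`. The
estimate belongs to the operator field `A = F'` and any vector `y`; here `y = F(u)`.
-/

theorem one_sub_mul_norm_sq_le_re_inner_of_norm_sub_le {𝕜 H : Type*} [RCLike 𝕜]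
    [SeminormedAddCommGroup H] [InnerProductSpace 𝕜 H] {x y : H} {q : ℝ}
    (h : ‖x - y‖ ≤ q * ‖y‖) :
    (1 - q) * ‖y‖ ^ 2 ≤ RCLike.re (inner 𝕜 x y) := by
  have hle : RCLike.re (inner 𝕜 (y - x) y) ≤ q * ‖y‖ * ‖y‖ :=
    (re_inner_le_norm _ _).trans (by rw [norm_sub_rev]; gcongr)
  rw [inner_sub_left, map_sub, inner_self_eq_norm_sq] at hle
  linarith

theorem norm_apply_rightInverse_sub_le {𝕜 E G : Type*} [NontriviallyNormedField 𝕜]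
    [SeminormedAddCommGroup E] [NormedSpace 𝕜 E] [SeminormedAddCommGroup G] [NormedSpace 𝕜 G]
    (A : E →L[𝕜] G) {A₀ : E →L[𝕜] G} {S : G →L[𝕜] E} (hS : Function.RightInverse S A₀) (y : G) :
    ‖A (S y) - y‖ ≤ ‖A - A₀‖ * ‖S‖ * ‖y‖ := by
  have hcomp : A (S y) - y = ((A - A₀).comp S) y := by
    rw [ContinuousLinearMap.comp_apply, sub_apply, hS y]
  rw [hcomp]
  exact ContinuousLinearMap.le_of_opNorm_le _ (ContinuousLinearMap.opNorm_comp_le _ _) y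

section ClosedBall

variable {𝕜 E : Type*} [RCLike 𝕜] [NormedAddCommGroup E] [NormedSpace ℝ E] [NormedSpace 𝕜 E]
  {u₀ u : E} {R M : ℝ}

theorem norm_image_sub_center_le_of_norm_hasFDerivWithinAt_le {G : Type*} [NormedAddCommGroup G]
    [NormedSpace 𝕜 G] {f : E → G} {f' : E → E →L[𝕜] G}
    (hf : ∀ v ∈ Metric.closedBall u₀ R, HasFDerivWithinAt f (f' v) (Metric.closedBall u₀ R) v)
    (hM : ∀ v ∈ Metric.closedBall u₀ R, ‖f' v‖ ≤ M) (hu : u ∈ Metric.closedBall u₀ R) :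
    ‖f u - f u₀‖ ≤ M * R := by
  have hM_nonneg : 0 ≤ M := (norm_nonneg _).trans (hM u hu)
  have hu₀ : u₀ ∈ Metric.closedBall u₀ R :=
    Metric.mem_closedBall_self (Metric.nonempty_closedBall.mp ⟨u, hu⟩)
  calc ‖f u - f u₀‖ ≤ M * ‖u - u₀‖ :=
        (convex_closedBall u₀ R).norm_image_sub_le_of_norm_hasFDerivWithin_le hf hM hu₀ hu
    _ ≤ M * R := by gcongr; exact mem_closedBall_iff_norm.mp hu

theorem modified_newton_coercivity_general {H : Type*} [NormedAddCommGroup H]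
    [InnerProductSpace 𝕜 H] {A : E → E →L[𝕜] H} {A' : E → E →L[𝕜] E →L[𝕜] H} {S : H →L[𝕜] E}
    {m q : ℝ}
    (hA : ∀ v ∈ Metric.closedBall u₀ R, HasFDerivWithinAt A (A' v) (Metric.closedBall u₀ R) v)
    (hM : ∀ v ∈ Metric.closedBall u₀ R, ‖A' v‖ ≤ M)
    (hS : Function.RightInverse S (A u₀)) (hm : ‖S‖ ≤ m) (hq : M * R * m ≤ q)
    (hu : u ∈ Metric.closedBall u₀ R) (y : H) :
    (1 - q) * ‖y‖ ^ 2 ≤ RCLike.re (inner 𝕜 (A u (S y)) y) := by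
  have hdiff : ‖A u - A u₀‖ ≤ M * R :=
    norm_image_sub_center_le_of_norm_hasFDerivWithinAt_le hA hM hu
  have hMR : 0 ≤ M * R := (norm_nonneg _).trans hdiff
  refine one_sub_mul_norm_sq_le_re_inner_of_norm_sub_le ?_
  calc ‖A u (S y) - y‖ ≤ ‖A u - A u₀‖ * ‖S‖ * ‖y‖ := norm_apply_rightInverse_sub_le _ hS y
    _ ≤ M * R * m * ‖y‖ := by gcongr
    _ ≤ q * ‖y‖ := by gcongr

end ClosedBall

/-- The key estimate of Example 5: if `‖F″(v)‖ ≤ M₂` on `B`,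
`‖[F′(u₀)]⁻¹‖ ≤ m₀`, and `M₂ R m₀ ≤ 1/2`, then for every `u ∈ B`:
`⟨F′(u)[F′(u₀)]⁻¹F(u), F(u)⟩ ≥ (1/2)‖F(u)‖²`. -/
theorem modified_newton_coercivity
    {H : Type*} [NormedAddCommGroup H] [InnerProductSpace ℝ H] [CompleteSpace H]
    (F : H → H) (F' : H → H →L[ℝ] H) (F'' : H → H →L[ℝ] H →L[ℝ] H)
    (hF' : ∀ u : H, HasFDerivAt F (F' u) u)
    (hF'' : ∀ u : H, HasFDerivAt F' (F'' u) u)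
    (u₀ : H) (R M₂ m₀ : ℝ) (hR : 0 < R)
    (B : Set H) (hB : B = {u : H | ‖u - u₀‖ ≤ R})
    (hM₂ : ∀ v ∈ B, ‖F'' v‖ ≤ M₂)
    (Finv₀ : H →L[ℝ] H)
    (hinv₁ : (F' u₀).comp Finv₀ = ContinuousLinearMap.id ℝ H)
    (hinv₂ : Finv₀.comp (F' u₀) = ContinuousLinearMap.id ℝ H)
    (hm₀ : ‖Finv₀‖ ≤ m₀)
    (hsmall : M₂ * R * m₀ ≤ 1 / 2) :
    ∀ u ∈ B, ⟪F' u (Finv₀ (F u)), F u⟫ ≥ (1 / 2) * ‖F u‖ ^ 2 := by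
  obtain rfl : B = Metric.closedBall u₀ R := hB.trans (Set.ext fun _ ↦ mem_closedBall_iff_norm.symm)
  intro u hu
  have hcoercive : (1 - 1 / 2) * ‖F u‖ ^ 2 ≤ ⟪F' u (Finv₀ (F u)), F u⟫ :=
    modified_newton_coercivity_general (fun v _ ↦ (hF'' v).hasFDerivWithinAt) hM₂
      (DFunLike.congr_fun hinv₁) hm₀ hsmall hu (F u)
  linarith
end

section
/- Descent methods. Let H be a real Hilbert space, let f : H → [0,∞) be Fréchet differentiable, and let b, c₂ > 0 be constants. Suppose u : [0,∞) → H is differentiable, u(0) = u₀, and for all t ≥ 0: ⟨f′(u(t)), u̇(t)⟩ = −f(u(t)) and ‖u̇(t)‖ ≤ c₂·f(u(t))^b. Then f(u(t)) = f(u₀)·e^{−t} for all t ≥ 0; the strong limit u(∞) := lim_{t→∞} u(t) exists; f(u(∞)) = 0; and ‖u(∞) − u(t)‖ ≤ (c₂·f(u₀)^b / b)·e^{−bt} for all t ≥ 0. -/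
open MeasureTheory Filter
open scoped RealInnerProductSpace

/-!
Along the trajectory `g t = f (u t)` solves `g' = -g`, so it decays exponentially, and the bound on
the speed of `u` becomes `c₂ * f u₀ ^ b * exp (-(b * t))`. This is integrable on `[0, ∞)`, so the
trajectory has finite length, hence converges, and the length of its tail bounds the distance to the
limit.
-/

open Set
open scoped Topology

theorem hasDerivAt_exp_neg_const_mul (k t : ℝ) :
    HasDerivAt (fun t ↦ Real.exp (-(k * t))) (-k * Real.exp (-(k * t))) t := by
  simpa only [neg_mul, mul_neg, mul_comm (Real.exp _)] using
    (hasDerivAt_const_mul (x := t) (-k)).exp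

section Calculus

variable {E : Type*} [NormedAddCommGroup E] [NormedSpace ℝ E]

theorem eq_exp_smul_of_hasDerivWithinAt_right_smul_self {g : ℝ → E} {k a b : ℝ}
    (hg : ContinuousOn g (Icc a b))
    (hg' : ∀ t ∈ Ico a b, HasDerivWithinAt g (k • g t) (Ici t) t) :
    ∀ t ∈ Icc a b, g t = Real.exp (k * (t - a)) • g a := by
  intro t ht
  have scaled_const : Real.exp (-(k * t)) • g t = Real.exp (-(k * a)) • g a := by
    refine constant_of_has_deriv_right_zero (f := fun s ↦ Real.exp (-(k * s)) • g s)
      ((HasDerivAt.continuousOn fun s _ ↦ hasDerivAt_exp_neg_const_mul k s).smul hg)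
      (fun s hs ↦ ?_) t ht
    convert! (hasDerivAt_exp_neg_const_mul k s).hasDerivWithinAt.smul (hg' s hs) using 1
    module
  calc g t = Real.exp (k * t) • Real.exp (-(k * t)) • g t := by
        rw [smul_smul, ← Real.exp_add, add_neg_cancel, Real.exp_zero, one_smul]
    _ = Real.exp (k * t) • Real.exp (-(k * a)) • g a := by rw [scaled_const]
    _ = Real.exp (k * (t - a)) • g a := by
        rw [smul_smul, ← Real.exp_add, ← sub_eq_add_neg, ← mul_sub]

theorem norm_sub_le_sub_of_norm_deriv_right_le {u u' : ℝ → E} {B B' : ℝ → ℝ} {a b : ℝ}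
    (hab : a ≤ b) (hu : ContinuousOn u (Icc a b))
    (hu' : ∀ t ∈ Ico a b, HasDerivWithinAt u (u' t) (Ici t) t)
    (hB : ContinuousOn B (Icc a b))
    (hB' : ∀ t ∈ Ico a b, HasDerivWithinAt B (B' t) (Ici t) t)
    (bound : ∀ t ∈ Ico a b, ‖u' t‖ ≤ B' t) :
    ‖u b - u a‖ ≤ B b - B a :=
  image_norm_le_of_norm_deriv_right_le_deriv_boundary' (f := fun t ↦ u t - u a)
    (B := fun t ↦ B t - B a) (hu.sub continuousOn_const)
    (fun t ht ↦ (hu' t ht).sub_const (u a)) (by simp) (hB.sub continuousOn_const)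
    (fun t ht ↦ (hB' t ht).sub_const (B a)) bound (right_mem_Icc.2 hab)

end Calculus

theorem exists_tendsto_of_dist_le_tendsto_zero {ι X : Type*} [Nonempty ι] [SemilatticeSup ι]
    [PseudoMetricSpace X] [CompleteSpace X] {u : ι → X} {r : ι → ℝ}
    (h : ∀ s t, s ≤ t → dist (u s) (u t) ≤ r s) (hr : Tendsto r atTop (𝓝 0)) :
    ∃ y, Tendsto u atTop (𝓝 y) ∧ ∀ s, dist (u s) y ≤ r s := by
  obtain ⟨y, hy⟩ := cauchySeq_tendsto_of_complete (cauchySeq_of_le_tendsto_0' r h hr)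
  exact ⟨y, hy, fun s ↦ le_of_tendsto (tendsto_const_nhds.dist hy)
    ((eventually_ge_atTop s).mono (h s))⟩

section FiniteLength

variable {E : Type*} [NormedAddCommGroup E] [NormedSpace ℝ E] [CompleteSpace E]
  {u u' : ℝ → E} {a : ℝ}

theorem exists_tendsto_of_norm_deriv_right_le {B B' : ℝ → ℝ} {L : ℝ}
    (hu : ContinuousOn u (Ici a))
    (hu' : ∀ t ∈ Ici a, HasDerivWithinAt u (u' t) (Ici t) t)
    (hB : ContinuousOn B (Ici a))
    (hB' : ∀ t ∈ Ici a, HasDerivWithinAt B (B' t) (Ici t) t)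
    (bound : ∀ t ∈ Ici a, ‖u' t‖ ≤ B' t) (hL : Tendsto B atTop (𝓝 L)) :
    ∃ y, Tendsto u atTop (𝓝 y) ∧ ∀ t ∈ Ici a, ‖y - u t‖ ≤ L - B t := by
  have increment_le (s : Ici a) (t : ℝ) (hst : s ≤ t) : ‖u t - u s‖ ≤ B t - B s := by
    have hIcc : Icc (s : ℝ) t ⊆ Ici a := fun x hx ↦ s.2.trans hx.1
    have hIco : Ico (s : ℝ) t ⊆ Ici a := Ico_subset_Icc_self.trans hIcc
    exact norm_sub_le_sub_of_norm_deriv_right_le hst (hu.mono hIcc) (fun x hx ↦ hu' x (hIco hx))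
      (hB.mono hIcc) (fun x hx ↦ hB' x (hIco hx)) fun x hx ↦ bound x (hIco hx)
  have le_limit (t : Ici a) : B t ≤ L :=
    ge_of_tendsto hL <| (eventually_ge_atTop (t : ℝ)).mono fun x hx ↦
      sub_nonneg.1 ((norm_nonneg _).trans (increment_le t x hx))
  have dist_le (s t : Ici a) (hst : s ≤ t) : dist (u s) (u t) ≤ L - B s := by
    rw [dist_comm, dist_eq_norm]
    exact (increment_le s t hst).trans (sub_le_sub_right (le_limit t) _)
  have remainder_tendsto : Tendsto (fun s : Ici a ↦ L - B s) atTop (𝓝 0) := by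
    simpa only [sub_self] using (tendsto_comp_val_Ici_atTop.2 hL).const_sub L
  obtain ⟨y, hy, hdist⟩ := exists_tendsto_of_dist_le_tendsto_zero dist_le remainder_tendsto
  refine ⟨y, tendsto_comp_val_Ici_atTop.1 hy, fun t ht ↦ ?_⟩
  simpa only [dist_eq_norm'] using hdist ⟨t, ht⟩

theorem exists_tendsto_of_norm_deriv_right_le_mul_exp {b K : ℝ} (hb : 0 < b)
    (hu : ContinuousOn u (Ici a))
    (hu' : ∀ t ∈ Ici a, HasDerivWithinAt u (u' t) (Ici t) t)
    (bound : ∀ t ∈ Ici a, ‖u' t‖ ≤ K * Real.exp (-(b * t))) :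
    ∃ y, Tendsto u atTop (𝓝 y) ∧ ∀ t ∈ Ici a, ‖y - u t‖ ≤ K / b * Real.exp (-(b * t)) := by
  have hasDerivAt_primitive (t : ℝ) :
      HasDerivAt (fun t ↦ -(K / b * Real.exp (-(b * t)))) (K * Real.exp (-(b * t))) t := by
    convert! ((hasDerivAt_exp_neg_const_mul b t).const_mul (K / b)).neg using 1
    field_simp
  have primitive_tendsto : Tendsto (fun t ↦ -(K / b * Real.exp (-(b * t)))) atTop (𝓝 0) := by
    simpa only [mul_zero, neg_zero, id, Function.comp_def] using
      ((Real.tendsto_exp_neg_atTop_nhds_zero.comp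
        (tendsto_id.const_mul_atTop hb)).const_mul (K / b)).neg
  simpa only [zero_sub, neg_neg] using exists_tendsto_of_norm_deriv_right_le hu hu'
    (HasDerivAt.continuousOn fun t _ ↦ hasDerivAt_primitive t)
    (fun t _ ↦ (hasDerivAt_primitive t).hasDerivWithinAt) bound primitive_tendsto

end FiniteLength

theorem hasDerivWithinAt_comp_of_hasGradientAt {H : Type*} [NormedAddCommGroup H]
    [InnerProductSpace ℝ H] [CompleteSpace H] {f : H → ℝ} {f' : H} {u : ℝ → H} {u' : H} {s : Set ℝ}
    {t : ℝ} (hf : HasGradientAt f f' (u t)) (hu : HasDerivWithinAt u u' s t) :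
    HasDerivWithinAt (fun x ↦ f (u x)) ⟪f', u'⟫ s t :=
  InnerProductSpace.toDual_apply_apply (𝕜 := ℝ) (x := f') (y := u') ▸
    hf.hasFDerivAt.comp_hasDerivWithinAt t hu

theorem descent_method_general {E : Type*} [NormedAddCommGroup E] [NormedSpace ℝ E]
    [CompleteSpace E] {f : E → ℝ} {b c : ℝ} {u u' : ℝ → E} (hf : Continuous f)
    (hb : 0 < b) (hf₀ : 0 ≤ f (u 0)) (hu : ContinuousOn u (Ici 0))
    (hu' : ∀ t ∈ Ici (0 : ℝ), HasDerivWithinAt u (u' t) (Ici t) t)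
    (hdesc : ∀ t ∈ Ici (0 : ℝ), HasDerivWithinAt (fun s ↦ f (u s)) (-f (u t)) (Ici t) t)
    (hbound : ∀ t ∈ Ici (0 : ℝ), ‖u' t‖ ≤ c * f (u t) ^ b) :
    (∀ t ∈ Ici (0 : ℝ), f (u t) = f (u 0) * Real.exp (-t)) ∧
      ∃ y, Tendsto u atTop (𝓝 y) ∧ f y = 0 ∧
        ∀ t ∈ Ici (0 : ℝ), ‖y - u t‖ ≤ c * f (u 0) ^ b / b * Real.exp (-(b * t)) := by
  have decay : ∀ t ∈ Ici (0 : ℝ), f (u t) = f (u 0) * Real.exp (-t) := by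
    intro t ht
    have h := eq_exp_smul_of_hasDerivWithinAt_right_smul_self (g := fun s ↦ f (u s)) (k := -1)
      (hf.comp_continuousOn (hu.mono Icc_subset_Ici_self))
      (fun s hs ↦ (neg_one_smul ℝ (f (u s))).symm ▸ hdesc s hs.1) t (right_mem_Icc.2 ht)
    rwa [sub_zero, neg_one_mul, smul_eq_mul, mul_comm] at h
  have speed_le : ∀ t ∈ Ici (0 : ℝ), ‖u' t‖ ≤ c * f (u 0) ^ b * Real.exp (-(b * t)) := by
    intro t ht
    calc ‖u' t‖ ≤ c * (f (u 0) * Real.exp (-t)) ^ b := decay t ht ▸ hbound t ht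
      _ = c * f (u 0) ^ b * Real.exp (-(b * t)) := by
        rw [Real.mul_rpow hf₀ (Real.exp_nonneg _), ← Real.exp_mul, neg_mul, mul_comm t, mul_assoc]
  obtain ⟨y, hy, rate⟩ := exists_tendsto_of_norm_deriv_right_le_mul_exp hb hu hu' speed_le
  have values_tendsto_zero : Tendsto (fun t ↦ f (u t)) atTop (𝓝 0) := by
    have h := Real.tendsto_exp_neg_atTop_nhds_zero.const_mul (f (u 0))
    rw [mul_zero] at h
    exact h.congr' ((eventually_ge_atTop 0).mono fun t ht ↦ (decay t ht).symm)
  exact ⟨decay, y, hy, tendsto_nhds_unique ((hf.tendsto y).comp hy) values_tendsto_zero, rate⟩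

/-- **Example 6: descent methods.** If `f ≥ 0` is differentiable with gradient
`f′`, and `u` satisfies `⟨f′(u(t)), u̇(t)⟩ = −f(u(t))` and `‖u̇(t)‖ ≤ c₂ f(u(t))ᵇ`,
then `f(u(t)) = f(u₀)e^{−t}`, the limit `u(∞)` exists, `f(u(∞)) = 0`, and
`‖u(∞) − u(t)‖ ≤ (c₂ f(u₀)ᵇ / b) e^{−bt}`. -/
theorem descent_method
    {H : Type*} [NormedAddCommGroup H] [InnerProductSpace ℝ H] [CompleteSpace H]
    (f : H → ℝ) (hfnn : ∀ x : H, 0 ≤ f x)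
    (f' : H → H) (hf' : ∀ x : H, HasGradientAt f (f' x) x)
    (b c₂ : ℝ) (hb : 0 < b) (hc₂ : 0 < c₂)
    (u₀ : H) (u : ℝ → H) (u' : ℝ → H)
    (hu0 : u 0 = u₀)
    (hu' : ∀ t ≥ (0:ℝ), HasDerivAt u (u' t) t)
    (hdesc : ∀ t ≥ (0:ℝ), ⟪f' (u t), u' t⟫ = -f (u t))
    (hbound : ∀ t ≥ (0:ℝ), ‖u' t‖ ≤ c₂ * f (u t) ^ b) :
    (∀ t ≥ (0:ℝ), f (u t) = f u₀ * Real.exp (-t)) ∧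
      ∃ y : H, Tendsto u atTop (nhds y) ∧ f y = 0 ∧
        ∀ t ≥ (0:ℝ), ‖y - u t‖ ≤ c₂ * f u₀ ^ b / b * Real.exp (-(b * t)) := by
  subst hu0
  exact descent_method_general (continuous_iff_continuousAt.2 fun x ↦ (hf' x).continuousAt) hb
    (hfnn _) (HasDerivAt.continuousOn hu') (fun t ht ↦ (hu' t ht).hasDerivWithinAt)
    (fun t ht ↦ hdesc t ht ▸
      hasDerivWithinAt_comp_of_hasGradientAt (hf' (u t)) (hu' t ht).hasDerivWithinAt) hbound
end

section
/- Let H be a real Hilbert space and let A : H → H be a bounded selfadjoint linear operator with ⟨Au, u⟩ ≥ 0 for all u ∈ H. Let f ∈ H and suppose there exists y ∈ H with Ay = f. Let P be the orthogonal projection of H onto the null-space N := ker A, let u₀ ∈ H, and let u : [0,∞) → H be the solution of u̇(t) = −Au(t) + f, u(0) = u₀ (explicitly, u(t) = e^{−tA}u₀ + ∫₀ᵗ e^{−(t−s)A} f ds). Then u(t) converges strongly as t → ∞ to u(∞) = y − Py + Pu₀, and A(u(∞)) = f. -/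
open MeasureTheory Filter
open scoped RealInnerProductSpace

/-!
Subtracting the equilibrium `y - P y + P u₀` from `u` leaves a solution `w` of `w' = -A w` with
`w 0 ⟂ ker A`. The Lyapunov function `‖w‖² + 2 t ⟪A w, w⟫ + 2 t² ‖A w‖²` is nonincreasing, so
`w` is bounded and `A (w t) → 0`. Hence `⟪w t, A v⟫ = ⟪A (w t), v⟫ → 0` for every `v`, and since the
range of `A` is dense in `(ker A)ᗮ`, also `⟪w t, w 0⟫ → 0`. The symmetry of `A` turns this weak
convergence into strong convergence, because `‖w t‖² = ⟪w (2 t), w 0⟫`.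
-/

open Set RCLike
open scoped Topology InnerProductSpace

/-- `IsDescentCurve A w`: the curve `w` solves `w' = -A w` on `[0, ∞)`, with a one-sided derivative
at `0`. The values of `w` at negative times are irrelevant. -/
def IsDescentCurve {E : Type*} [NormedAddCommGroup E] [NormedSpace ℝ E] (A : E → E) (w : ℝ → E) :
    Prop :=
  IsIntegralCurveOn w (fun _ x ↦ -A x) (Ici 0)

section InnerProduct

variable {𝕜 E ι : Type*} [RCLike 𝕜] [NormedAddCommGroup E] [InnerProductSpace 𝕜 E]

theorem hasDerivWithinAt_re_inner [NormedSpace ℝ E] {f g : ℝ → E} {f' g' : E} {s : Set ℝ} {t : ℝ}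
    (hf : HasDerivWithinAt f f' s t) (hg : HasDerivWithinAt g g' s t) :
    HasDerivWithinAt (fun t ↦ re ⟪f t, g t⟫_𝕜) (re ⟪f t, g'⟫_𝕜 + re ⟪f', g t⟫_𝕜) s t := by
  simpa only [reCLM_apply, map_add, Function.comp_def] using
    (reCLM (K := 𝕜)).hasFDerivAt.comp_hasDerivWithinAt t (hf.inner 𝕜 hg)

theorem tendsto_inner_zero_of_mem_closure {l : Filter ι} {F : ι → E} {C : ℝ} {S : Set E} {x : E}
    (hF : ∀ᶠ i in l, ‖F i‖ ≤ C) (hS : ∀ y ∈ S, Tendsto (fun i ↦ ⟪F i, y⟫_𝕜) l (𝓝 0))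
    (hx : x ∈ closure S) : Tendsto (fun i ↦ ⟪F i, x⟫_𝕜) l (𝓝 0) := by
  rw [Metric.tendsto_nhds]
  intro ε hε
  have hC : 0 < |C| + 1 := by positivity
  obtain ⟨y, hyS, hxy⟩ := Metric.mem_closure_iff.1 hx (ε / 2 / (|C| + 1)) (by positivity)
  rw [dist_eq_norm, lt_div_iff₀' hC] at hxy
  filter_upwards [hF, Metric.tendsto_nhds.1 (hS y hyS) (ε / 2) (by positivity)] with i hi hiy
  rw [dist_zero_right] at hiy ⊢
  calc ‖⟪F i, x⟫_𝕜‖ = ‖⟪F i, x - y⟫_𝕜 + ⟪F i, y⟫_𝕜‖ := by rw [← inner_add_right, sub_add_cancel]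
    _ ≤ ‖F i‖ * ‖x - y‖ + ‖⟪F i, y⟫_𝕜‖ := norm_add_le_of_le (norm_inner_le_norm _ _) le_rfl
    _ ≤ (|C| + 1) * ‖x - y‖ + ‖⟪F i, y⟫_𝕜‖ := by
      gcongr
      linarith [le_abs_self C]
    _ < ε := by linarith

end InnerProduct

namespace IsDescentCurve

variable {𝕜 E : Type*} [RCLike 𝕜] [NormedAddCommGroup E] [InnerProductSpace 𝕜 E] [NormedSpace ℝ E]
  {w : ℝ → E} {t : ℝ}

theorem apply {A : E →L[𝕜] E} (hw : IsDescentCurve A w) : IsDescentCurve A (fun t ↦ A (w t)) :=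
  fun t ht ↦ by
    simpa [Function.comp_def] using
      (A.restrictScalars ℝ).hasFDerivAt.comp_hasDerivWithinAt t (hw t ht)

theorem hasDerivWithinAt_norm_sq {A : E → E} (hw : IsDescentCurve A w) (ht : 0 ≤ t) :
    HasDerivWithinAt (fun t ↦ ‖w t‖ ^ 2) (-(2 * re ⟪A (w t), w t⟫_𝕜)) (Ici 0) t := by
  have h := hasDerivWithinAt_re_inner (𝕜 := 𝕜) (hw t ht) (hw t ht)
  simp only [inner_self_eq_norm_sq, inner_neg_left, inner_neg_right, map_neg,
    inner_re_symm (w t)] at h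
  exact h.congr_deriv (by ring)

theorem hasDerivWithinAt_re_inner_apply {A : E →L[𝕜] E} (hA : (A : E →ₗ[𝕜] E).IsSymmetric)
    (hw : IsDescentCurve A w) (ht : 0 ≤ t) :
    HasDerivWithinAt (fun t ↦ re ⟪A (w t), w t⟫_𝕜) (-(2 * ‖A (w t)‖ ^ 2)) (Ici 0) t := by
  have h := hasDerivWithinAt_re_inner (𝕜 := 𝕜) (hw.apply t ht) (hw t ht)
  have hAA : ⟪A (A (w t)), w t⟫_𝕜 = ⟪A (w t), A (w t)⟫_𝕜 := hA _ _
  simp only [inner_neg_left, inner_neg_right, map_neg, hAA, inner_self_eq_norm_sq] at h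
  exact h.congr_deriv (by ring)

theorem lyapunov_le {A : E →L[𝕜] E} (hA : A.IsPositive) (hw : IsDescentCurve A w) (ht : 0 ≤ t) :
    ‖w t‖ ^ 2 + 2 * t * re ⟪A (w t), w t⟫_𝕜 + 2 * t ^ 2 * ‖A (w t)‖ ^ 2 ≤ ‖w 0‖ ^ 2 := by
  let V : ℝ → ℝ := fun t ↦
    ‖w t‖ ^ 2 + 2 * t * re ⟪A (w t), w t⟫_𝕜 + 2 * t ^ 2 * ‖A (w t)‖ ^ 2
  have hV (s : ℝ) (hs : 0 ≤ s) :
      HasDerivWithinAt V (-(4 * s ^ 2 * re ⟪A (A (w s)), A (w s)⟫_𝕜)) (Ici 0) s := by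
    have hlin := (hasDerivWithinAt_id s (Ici 0)).const_mul 2
    have hsq := ((hasDerivWithinAt_id s (Ici 0)).pow 2).const_mul 2
    refine (((hw.hasDerivWithinAt_norm_sq (𝕜 := 𝕜) hs).add
      (hlin.mul (hw.hasDerivWithinAt_re_inner_apply hA.isSymmetric hs))).add
      (hsq.mul (hw.apply.hasDerivWithinAt_norm_sq (𝕜 := 𝕜) hs))).congr_deriv ?_
    simp only [id_eq, mul_one, mul_neg, neg_add_cancel_left, Nat.cast_ofNat, Nat.add_one_sub_one,
      pow_one, Pi.pow_apply]
    ring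
  have hanti : AntitoneOn V (Ici 0) := by
    refine antitoneOn_of_hasDerivWithinAt_nonpos (convex_Ici 0)
      (fun s hs ↦ (hV s hs).continuousWithinAt)
      (fun s hs ↦ (hV s (interior_subset hs)).mono interior_subset) fun s _ ↦ ?_
    have hform := hA.re_inner_nonneg_left (A (w s))
    exact neg_nonpos.2 (by positivity)
  simpa [V] using hanti self_mem_Ici ht ht

theorem norm_le {A : E →L[𝕜] E} (hA : A.IsPositive) (hw : IsDescentCurve A w) (ht : 0 ≤ t) :
    ‖w t‖ ≤ ‖w 0‖ := by
  have hform := hA.re_inner_nonneg_left (w t)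
  refine le_of_sq_le_sq (le_trans ?_ (hw.lyapunov_le hA ht)) (norm_nonneg _)
  rw [add_assoc]
  exact le_add_of_nonneg_right (by positivity)

theorem mul_norm_apply_le {A : E →L[𝕜] E} (hA : A.IsPositive) (hw : IsDescentCurve A w)
    (ht : 0 ≤ t) : t * ‖A (w t)‖ ≤ ‖w 0‖ := by
  have hform := mul_nonneg ht (hA.re_inner_nonneg_left (w t))
  refine le_of_sq_le_sq (le_trans ?_ (hw.lyapunov_le hA ht)) (norm_nonneg _)
  rw [mul_pow]
  linarith [sq_nonneg ‖w t‖, show 0 ≤ t ^ 2 * ‖A (w t)‖ ^ 2 by positivity]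

theorem tendsto_apply_zero {A : E →L[𝕜] E} (hA : A.IsPositive) (hw : IsDescentCurve A w) :
    Tendsto (fun t ↦ A (w t)) atTop (𝓝 0) := by
  refine squeeze_zero_norm' ?_ (tendsto_const_nhds.div_atTop tendsto_id : Tendsto (‖w 0‖ / ·) _ _)
  filter_upwards [eventually_gt_atTop 0] with t ht
  exact (le_div_iff₀' ht).2 (hw.mul_norm_apply_le hA ht.le)

theorem inner_eq_inner_zero_add {A : E →ₗ[𝕜] E} (hA : A.IsSymmetric) {v : ℝ → E} {s : ℝ}
    (hv : IsDescentCurve A v) (hw : IsDescentCurve A w) (hs : 0 ≤ s) (ht : 0 ≤ t) :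
    ⟪v s, w t⟫_𝕜 = ⟪v 0, w (s + t)⟫_𝕜 := by
  have hderiv (r : ℝ) (hr : r ∈ Icc 0 s) :
      HasDerivWithinAt (fun r ↦ ⟪v r, w (s + t - r)⟫_𝕜) 0 (Icc 0 s) r := by
    have hmaps : MapsTo (fun r ↦ s + t - r) (Icc 0 s) (Ici 0) := fun r hr ↦ by
      rw [mem_Ici]
      linarith [hr.2]
    have hwr : HasDerivWithinAt (fun r ↦ w (s + t - r)) (A (w (s + t - r))) (Icc 0 s) r := by
      simpa [Function.comp_def] using (hw _ (hmaps hr)).scomp r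
        ((hasDerivWithinAt_id r (Icc 0 s)).const_sub (s + t)) hmaps
    refine (((hv r hr.1).mono Icc_subset_Ici_self).inner 𝕜 hwr).congr_deriv ?_
    rw [inner_neg_left, hA, add_neg_cancel]
  have hconst := constant_of_derivWithin_zero
    (fun r hr ↦ (hderiv r hr).differentiableWithinAt)
    (fun r hr ↦ (hderiv r (Ico_subset_Icc_self hr)).derivWithin
      (uniqueDiffOn_Icc (hr.1.trans_lt hr.2) r (Ico_subset_Icc_self hr))) s (right_mem_Icc.2 hs)
  simpa using hconst

theorem tendsto_inner_zero [CompleteSpace E] {A : E →L[𝕜] E} (hA : A.IsPositive)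
    (hw : IsDescentCurve A w) {x : E} (hx : x ∈ A.kerᗮ) :
    Tendsto (fun t ↦ ⟪w t, x⟫_𝕜) atTop (𝓝 0) := by
  rw [← hA.isSymmetric.orthogonal_range, Submodule.orthogonal_orthogonal_eq_closure] at hx
  have hbound : ∀ᶠ t in atTop, ‖w t‖ ≤ ‖w 0‖ :=
    (eventually_ge_atTop 0).mono fun t ht ↦ hw.norm_le hA ht
  refine tendsto_inner_zero_of_mem_closure hbound ?_ hx
  rintro _ ⟨v, rfl⟩
  have hAw : Tendsto (fun t ↦ ⟪A (w t), v⟫_𝕜) atTop (𝓝 0) := by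
    simpa using (hw.tendsto_apply_zero hA).inner (𝕜 := 𝕜) (tendsto_const_nhds (x := v))
  exact hAw.congr fun t ↦ hA.isSymmetric (w t) v

theorem tendsto_zero [CompleteSpace E] {A : E →L[𝕜] E} (hA : A.IsPositive)
    (hw : IsDescentCurve A w) (hw0 : w 0 ∈ A.kerᗮ) : Tendsto w atTop (𝓝 0) := by
  have hweak : Tendsto (fun t ↦ ‖⟪w (t + t), w 0⟫_𝕜‖) atTop (𝓝 0) := by
    simpa [Function.comp_def] using
      ((hw.tendsto_inner_zero hA hw0).comp (tendsto_id.atTop_add_atTop tendsto_id)).norm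
  have hsq : Tendsto (fun t ↦ ‖w t‖ ^ 2) atTop (𝓝 0) := by
    refine hweak.congr' ?_
    filter_upwards [eventually_ge_atTop 0] with t ht
    rw [norm_inner_symm, ← hw.inner_eq_inner_zero_add (A := A) hA.isSymmetric hw ht ht]
    simp [inner_self_eq_norm_sq_to_K]
  rw [tendsto_zero_iff_norm_tendsto_zero]
  simpa using hsq.sqrt

end IsDescentCurve

theorem isDescentCurve_sub_const {E : Type*} [NormedAddCommGroup E] [NormedSpace ℝ E]
    {R : Type*} [Ring R] [Module R E] {A : E →ₗ[R] E} {u : ℝ → E} {p : E}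
    (hu : IsIntegralCurveOn u (fun _ x ↦ -A x + A p) (Ici 0)) :
    IsDescentCurve A (fun t ↦ u t - p) :=
  fun t ht ↦ ((hu t ht).sub_const p).congr_deriv (by simp [sub_eq_add_neg, add_comm])

theorem linear_equation_no_regularization_general
    {𝕜 H : Type*} [RCLike 𝕜] [NormedAddCommGroup H] [InnerProductSpace 𝕜 H] [NormedSpace ℝ H]
    [CompleteSpace H] {A : H →L[𝕜] H} (hA : A.IsPositive) {f y : H} (hy : A y = f) {u : ℝ → H}
    (hu : IsIntegralCurveOn u (fun _ x ↦ -A x + f) (Ici 0)) :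
    Tendsto u atTop (𝓝 (y - A.ker.starProjection y + A.ker.starProjection (u 0))) ∧
      A (y - A.ker.starProjection y + A.ker.starProjection (u 0)) = f := by
  set p := y - A.ker.starProjection y + A.ker.starProjection (u 0) with hp
  have hAP (x : H) : A (A.ker.starProjection x) = 0 := A.ker.starProjection_apply_mem x
  have hAp : A p = f := by simp [hp, hAP, hy]
  have hcurve : IsDescentCurve A (fun t ↦ u t - p) :=
    isDescentCurve_sub_const (A := (A : H →ₗ[𝕜] H)) (by simpa [hAp] using hu)
  have hperp : u 0 - p ∈ A.kerᗮ := by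
    have h := A.ker.sub_starProjection_mem_orthogonal (u 0 - y)
    rw [map_sub] at h
    convert h using 1
    rw [hp]
    abel
  exact ⟨by simpa using (hcurve.tendsto_zero hA hperp).add_const p, hAp⟩

/-- Section 4, case `α = 0`: if `A ≥ 0` is bounded selfadjoint, `Ay = f`, and
`u` solves `u̇ = −Au + f`, `u(0) = u₀`, then `u(t) → y − Py + Pu₀` strongly,
where `P` is the orthogonal projection onto `ker A`, and `A(u(∞)) = f`. -/
theorem linear_equation_no_regularization
    {H : Type*} [NormedAddCommGroup H] [InnerProductSpace ℝ H] [CompleteSpace H]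
    (A : H →L[ℝ] H)
    (hAsa : ∀ x y : H, ⟪A x, y⟫ = ⟪x, A y⟫)
    (hAnn : ∀ x : H, 0 ≤ ⟪A x, x⟫)
    (f y : H) (hy : A y = f)
    (P : H →L[ℝ] H)
    (hPker : ∀ x : H, A (P x) = 0)
    (hPorth : ∀ x z : H, A z = 0 → ⟪x - P x, z⟫ = 0)
    (u₀ : H) (u : ℝ → H)
    (hu0 : u 0 = u₀)
    (hu' : ∀ t ≥ (0:ℝ), HasDerivAt u (-(A (u t)) + f) t) :
    Tendsto u atTop (nhds (y - P y + P u₀)) ∧ A (y - P y + P u₀) = f := by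
  have hP (x : H) : A.ker.starProjection x = P x :=
    Submodule.eq_starProjection_of_mem_of_inner_eq_zero (hPker x) (hPorth x)
  simpa only [hP, hu0] using linear_equation_no_regularization_general
    ⟨hAsa, hAnn⟩ hy fun t ht ↦ (hu' t ht).hasDerivWithinAt
end

section
/- Let H be a real Hilbert space and let A : H → H be a bounded selfadjoint linear operator with ⟨Au, u⟩ ≥ 0 for all u ∈ H. Let f ∈ H and suppose there exists y ∈ H with Ay = f, and let P be the orthogonal projection of H onto ker A. Let α : [0,∞) → (0,∞) be continuous with lim_{t→∞} α(t) = 0 and ∫₀^∞ α(t) dt = +∞, let u₀ ∈ H, and let u : [0,∞) → H be the solution of the regularized Cauchy problem u̇(t) = −Au(t) − α(t)u(t) + f, u(0) = u₀. Then u(t) converges strongly as t → ∞ to u(∞) = y − Py, and A(u(∞)) = f. -/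
open MeasureTheory Filter
open scoped RealInnerProductSpace

/-!
Put `w = y - P y`, so that `A w = f`, and let `h t = ‖u t - w‖ ^ 2`. The vector `w` is orthogonal to
`ker A`, hence lies in the closure of the range of the selfadjoint operator `A`. For every `z`,
splitting `w = A z + (w - A z)` and completing the square in the quadratic form of `A` gives
`h' ≤ -α (h - ‖w - A z‖ ^ 2 - α / 2 * ⟪A z, z⟫)`. Since `∫ α = ∞` and `α → 0`, the limsup of `h` is
at most `‖w - A z‖ ^ 2`, which is arbitrarily small.
-/

theorem topologicalClosure_range_of_isSymmetric {𝕜 E : Type*} [RCLike 𝕜] [NormedAddCommGroup E]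
    [InnerProductSpace 𝕜 E] [CompleteSpace E] {T : E →ₗ[𝕜] E} (hT : T.IsSymmetric) :
    T.range.topologicalClosure = T.kerᗮ := by
  rw [← hT.orthogonal_range, Submodule.orthogonal_orthogonal_eq_closure]

theorem hasDerivAt_integral_of_continuousOn_Ici {E : Type*} [NormedAddCommGroup E]
    [NormedSpace ℝ E] [CompleteSpace E] {g : ℝ → E} {a t : ℝ} (hg : ContinuousOn g (Set.Ici a))
    (ht : a < t) : HasDerivAt (fun x ↦ ∫ s in a..x, g s) (g t) t := by
  have hint : IntervalIntegrable g volume a t :=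
    (hg.mono (by simpa [Set.uIcc_of_le ht.le] using Set.Icc_subset_Ici_self)).intervalIntegrable
  have hmeas : StronglyMeasurableAtFilter g (nhds t) :=
    (hg.mono Set.Ioi_subset_Ici_self).stronglyMeasurableAtFilter isOpen_Ioi t ht
  exact intervalIntegral.integral_hasDerivAt_right hint hmeas (hg.continuousAt (Ici_mem_nhds ht))

section Gronwall

variable {h h' α I : ℝ → ℝ} {c : ℝ}

theorem antitoneOn_sub_mul_exp_of_hasDerivAt_le {T : ℝ}
    (hh : ∀ t ≥ T, HasDerivAt h (h' t) t) (hI : ∀ t ≥ T, HasDerivAt I (α t) t)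
    (hle : ∀ t ≥ T, h' t ≤ -α t * (h t - c)) :
    AntitoneOn (fun t ↦ (h t - c) * Real.exp (I t)) (Set.Ici T) := by
  have hderiv : ∀ t ≥ T, HasDerivAt (fun t ↦ (h t - c) * Real.exp (I t))
      (h' t * Real.exp (I t) + (h t - c) * (Real.exp (I t) * α t)) t :=
    fun t ht ↦ ((hh t ht).sub_const c).mul (hI t ht).exp
  refine antitoneOn_of_hasDerivWithinAt_nonpos (convex_Ici T)
    (fun t ht ↦ (hderiv t ht).continuousAt.continuousWithinAt)
    (fun t ht ↦ (hderiv t (interior_subset ht)).hasDerivWithinAt) fun t ht ↦ ?_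
  linarith [mul_le_mul_of_nonneg_right (hle t (interior_subset ht)) (Real.exp_pos (I t)).le]

theorem eventually_lt_of_hasDerivAt_le {d : ℝ} (hcd : c < d)
    (hh : ∀ᶠ t in atTop, HasDerivAt h (h' t) t) (hI : ∀ᶠ t in atTop, HasDerivAt I (α t) t)
    (hI_top : Tendsto I atTop atTop) (hle : ∀ᶠ t in atTop, h' t ≤ -α t * (h t - c)) :
    ∀ᶠ t in atTop, h t < d := by
  obtain ⟨T, hT⟩ := eventually_atTop.mp (hh.and (hI.and hle))
  have hanti := antitoneOn_sub_mul_exp_of_hasDerivAt_le (fun t ht ↦ (hT t ht).1)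
    (fun t ht ↦ (hT t ht).2.1) (fun t ht ↦ (hT t ht).2.2)
  have hlim : Tendsto (fun t ↦ (h T - c) * Real.exp (I T) * Real.exp (-I t)) atTop (nhds 0) := by
    simpa using (Real.tendsto_exp_neg_atTop_nhds_zero.comp hI_top).const_mul
      ((h T - c) * Real.exp (I T))
  filter_upwards [hlim.eventually_lt_const (sub_pos.mpr hcd), eventually_ge_atTop T] with t hlt hTt
  have hbound : h t - c ≤ (h T - c) * Real.exp (I T) * Real.exp (-I t) := by
    rw [Real.exp_neg, ← div_eq_mul_inv, le_div_iff₀ (Real.exp_pos _)]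
    exact hanti Set.self_mem_Ici hTt hTt
  linarith

end Gronwall

section Positive

variable {H : Type*} [NormedAddCommGroup H] [InnerProductSpace ℝ H] {A : H →ₗ[ℝ] H}

theorem neg_inner_map_add_le (hA : A.IsPositive) (v z : H) :
    -⟪A (v + z), v⟫ ≤ ⟪A z, z⟫ / 4 := by
  have hsymm : ⟪A v, z⟫ = ⟪A z, v⟫ := by rw [hA.isSymmetric, real_inner_comm]
  have hsquare : ⟪A (v + (1 / 2 : ℝ) • z), v + (1 / 2 : ℝ) • z⟫ =
      ⟪A (v + z), v⟫ + ⟪A z, z⟫ / 4 := by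
    simp only [map_add, map_smul, inner_add_left, inner_add_right, real_inner_smul_left,
      real_inner_smul_right, hsymm]
    ring
  linarith [hA.inner_nonneg_left (v + (1 / 2 : ℝ) • z)]

theorem two_mul_inner_sub_regularized_le (hA : A.IsPositive) {a : ℝ} (ha : 0 ≤ a) (x w z : H) :
    2 * ⟪x - w, -(A x) - a • x + A w⟫ ≤
      -a * (‖x - w‖ ^ 2 - (‖w - A z‖ ^ 2 + a * (⟪A z, z⟫ / 2))) := by
  set v := x - w
  set e := w - A z
  have hsplit : -(A x) - a • x + A w = -A (v + a • z) - a • (v + e) := by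
    simp only [v, e, map_add, map_sub, map_smul]
    module
  have hquad : -⟪v, A (v + a • z)⟫ ≤ a ^ 2 * ⟪A z, z⟫ / 4 := by
    have := neg_inner_map_add_le hA v (a • z)
    rw [map_smul, real_inner_smul_left, real_inner_smul_right, real_inner_comm] at this
    linarith
  have hcross : -2 * ⟪v, e⟫ ≤ ‖v‖ ^ 2 + ‖e‖ ^ 2 := by
    linarith [norm_add_sq_real v e, sq_nonneg ‖v + e‖]
  calc 2 * ⟪v, -(A x) - a • x + A w⟫
      = 2 * -⟪v, A (v + a • z)⟫ + a * (-2 * ⟪v, e⟫) - 2 * a * ‖v‖ ^ 2 := by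
        rw [hsplit, inner_sub_right, inner_neg_right, real_inner_smul_right, inner_add_right,
          real_inner_self_eq_norm_sq]
        ring
    _ ≤ 2 * (a ^ 2 * ⟪A z, z⟫ / 4) + a * (‖v‖ ^ 2 + ‖e‖ ^ 2) - 2 * a * ‖v‖ ^ 2 := by gcongr
    _ = -a * (‖v‖ ^ 2 - (‖e‖ ^ 2 + a * (⟪A z, z⟫ / 2))) := by ring

theorem linear_equation_with_regularization_general (hA : A.IsPositive) {f w : H} (hw : A w = f)
    (hw_range : w ∈ A.range.topologicalClosure) {α I : ℝ → ℝ} (hα : ∀ᶠ t in atTop, 0 ≤ α t)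
    (hα_lim : Tendsto α atTop (nhds 0)) (hI : ∀ᶠ t in atTop, HasDerivAt I (α t) t)
    (hI_top : Tendsto I atTop atTop) {u : ℝ → H}
    (hu : ∀ᶠ t in atTop, HasDerivAt u (-(A (u t)) - α t • u t + f) t) :
    Tendsto u atTop (nhds w) := by
  subst hw
  rw [Metric.tendsto_nhds]
  intro r hr
  obtain ⟨z, hz⟩ : ∃ z, ‖w - A z‖ < r := by
    simpa only [dist_eq_norm] using Metric.mem_closure_range_iff.mp hw_range r hr
  obtain ⟨c, hzc, hcr⟩ := exists_between (pow_lt_pow_left₀ hz (norm_nonneg _) two_ne_zero)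
  have hlim : Tendsto (fun t ↦ ‖w - A z‖ ^ 2 + α t * (⟪A z, z⟫ / 2)) atTop
      (nhds (‖w - A z‖ ^ 2)) := by
    simpa using (hα_lim.mul_const (⟪A z, z⟫ / 2)).const_add (‖w - A z‖ ^ 2)
  have hderiv := hu.mono fun t ht ↦ (ht.sub_const w).norm_sq
  have hsq : ∀ᶠ t in atTop, ‖u t - w‖ ^ 2 < r ^ 2 := by
    refine eventually_lt_of_hasDerivAt_le hcr hderiv hI hI_top ?_
    filter_upwards [hα, hlim.eventually_lt_const hzc] with t hαt hct
    refine (two_mul_inner_sub_regularized_le hA hαt (u t) w z).trans ?_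
    exact mul_le_mul_of_nonpos_left (by linarith) (neg_nonpos.mpr hαt)
  filter_upwards [hsq] with t ht
  rw [dist_eq_norm]
  exact lt_of_pow_lt_pow_left₀ 2 hr.le ht

end Positive

/-- Section 4, regularized case: if `A ≥ 0` is bounded selfadjoint, `Ay = f`,
`α > 0` is continuous with `α(t) → 0` and `∫₀^∞ α = ∞`, and `u` solves
`u̇ = −Au − α(t)u + f`, `u(0) = u₀`, then `u(t) → y − Py` strongly, where `P`
is the orthogonal projection onto `ker A`, and `A(y − Py) = f`. -/
theorem linear_equation_with_regularization
    {H : Type*} [NormedAddCommGroup H] [InnerProductSpace ℝ H] [CompleteSpace H]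
    (A : H →L[ℝ] H)
    (hAsa : ∀ x y : H, ⟪A x, y⟫ = ⟪x, A y⟫)
    (hAnn : ∀ x : H, 0 ≤ ⟪A x, x⟫)
    (f y : H) (hy : A y = f)
    (P : H →L[ℝ] H)
    (hPker : ∀ x : H, A (P x) = 0)
    (hPorth : ∀ x z : H, A z = 0 → ⟪x - P x, z⟫ = 0)
    (α : ℝ → ℝ)
    (hαpos : ∀ t ≥ (0:ℝ), 0 < α t)
    (hαcont : ContinuousOn α (Set.Ici (0:ℝ)))
    (hαlim : Tendsto α atTop (nhds 0))
    (hαint : Tendsto (fun t => ∫ s in (0:ℝ)..t, α s) atTop atTop)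
    (u₀ : H) (u : ℝ → H)
    (hu0 : u 0 = u₀)
    (hu' : ∀ t ≥ (0:ℝ), HasDerivAt u (-(A (u t)) - α t • u t + f) t) :
    Tendsto u atTop (nhds (y - P y)) ∧ A (y - P y) = f := by
  have hw : A (y - P y) = f := by rw [map_sub, hPker, sub_zero, hy]
  have hw_range : y - P y ∈ A.toLinearMap.range.topologicalClosure := by
    rw [topologicalClosure_range_of_isSymmetric hAsa, Submodule.mem_orthogonal']
    exact hPorth y
  have hα : ∀ᶠ t in atTop, 0 ≤ α t := (eventually_ge_atTop 0).mono fun t ht ↦ (hαpos t ht).le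
  have hI : ∀ᶠ t in atTop, HasDerivAt (fun t ↦ ∫ s in (0:ℝ)..t, α s) (α t) t :=
    (eventually_gt_atTop 0).mono fun t ht ↦ hasDerivAt_integral_of_continuousOn_Ici hαcont ht
  exact ⟨linear_equation_with_regularization_general ⟨hAsa, hAnn⟩ hw hw_range hα hαlim hI hαint
    ((eventually_ge_atTop 0).mono hu'), hw⟩
end
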